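/- arXiv:math/0509446 — 6 statements merged into one kernel-verified Lean document; each statement's English description precedes it below -/
import Mathlib

section
/- Suppose b > 0, β > 0, T > 0, a ≥ 0 is a constant, and u : [0,T) → [0,∞) is locally integrable and satisfies u(t) ≤ a + b ∫₀ᵗ (t−s)^{β−1} u(s) ds for all t ∈ [0,T). Then, with θ = (b Γ(β))^{1/β}, for all t ∈ [0,T) one has u(t) ≤ a · E_β(θt). -/
open Real MeasureTheory

noncomputable section

/-- The Mittag-Leffler-type function `E_β(z) = Σ_{n≥0} z^{nβ}/Γ(nβ+1)`. -/
def mittagLeffler (β z : ℝ) : ℝ := ∑' n : ℕ, z ^ ((n : ℝ) * β) / Real.Gamma ((n : ℝ) * β + 1)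

open ProbabilityTheory
open scoped ENNReal

def hKer (p x : ℝ) : ℝ≥0∞ := if 0 < x then ENNReal.ofReal (x ^ (p - 1) / Real.Gamma p) else 0

lemma hKer_measurable (p : ℝ) : Measurable (hKer p) :=
  Measurable.ite measurableSet_Ioi (by fun_prop) (by fun_prop)

lemma hKer_conv {p q : ℝ} (hp : 0 < p) (hq : 0 < q) : hKer p ⋆ₗ[volume] hKer q = hKer (p + q) := by
  ext x
  rw [lconvolution_def]
  by_cases hx : 0 < x
  · have e : ∀ y, hKer p y * hKer q (-y + x) =
        ENNReal.ofReal (x ^ (p + q - 2) / Real.Gamma (p + q)) * betaPDF p q (x⁻¹ * y) := by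
      intro y
      unfold hKer
      rw [betaPDF_eq]
      by_cases h1 : 0 < y
      · by_cases h2 : y < x
        · have h3 : 0 < x⁻¹ * y := by positivity
          have h4 : x⁻¹ * y < 1 := by rw [inv_mul_lt_iff₀ hx]; simpa
          rw [if_pos h1, if_pos (by linarith), if_pos ⟨h3, h4⟩]
          have g1 := Real.Gamma_pos_of_pos hp
          have g2 := Real.Gamma_pos_of_pos hq
          have g3 := Real.Gamma_pos_of_pos (add_pos hp hq)
          rw [← ENNReal.ofReal_mul (by positivity), ← ENNReal.ofReal_mul (by positivity)]
          congr 1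
          have hy : y = x * (x⁻¹ * y) := by field_simp
          generalize x⁻¹ * y = z at *
          subst hy
          have : -(x * z) + x = x * (1 - z) := by ring
          rw [this, Real.mul_rpow hx.le h3.le, Real.mul_rpow hx.le (by linarith)]
          have : x ^ (p + q - 2) = x ^ (p - 1) * x ^ (q - 1) := by
            rw [← Real.rpow_add hx]; ring_nf
          rw [this, beta]
          field_simp
        · rw [if_neg (c := 0 < -y + x) (by linarith), if_neg (c := 0 < x⁻¹ * y ∧ _)]
          · simp
          · rw [inv_mul_lt_iff₀ hx]; simp at h2 ⊢; intro _; exact h2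
      · rw [if_neg h1, if_neg (c := 0 < x⁻¹ * y ∧ _)]
        · simp
        · intro h; apply h1; have := mul_pos hx h.1; rwa [mul_inv_cancel_left₀ hx.ne'] at this
    simp_rw [e]
    have hm : Measurable (betaPDF p q) := by unfold betaPDF; fun_prop
    rw [lintegral_const_mul _ (by fun_prop)]
    have := lintegral_map (μ := volume) hm (measurable_const_mul x⁻¹)
    rw [← this, Real.map_volume_mul_left (by positivity), lintegral_smul_measure,
      lintegral_betaPDF_eq_one hp hq]
    have g3 := Real.Gamma_pos_of_pos (add_pos hp hq)
    simp only [inv_inv, abs_of_pos hx, hKer, if_pos hx, smul_eq_mul, mul_one]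
    rw [← ENNReal.ofReal_mul (by positivity)]
    congr 1
    have : x ^ (p + q - 1) = x ^ (p + q - 2) * x := by
      nth_rw 3 [← Real.rpow_one x]
      rw [← Real.rpow_add hx]; ring_nf
    rw [this]; ring
  · simp only [hKer, if_neg hx]
    rw [lintegral_eq_zero_of_ae_eq_zero]
    refine Filter.Eventually.of_forall fun y => ?_
    beta_reduce
    by_cases h1 : 0 < y
    · rw [if_neg (c := 0 < -y + x) (by linarith)]; simp
    · simp [h1]

lemma gamma_lower {M y : ℝ} (hM : 0 < M) (hy : 1 ≤ y) :
    M ^ (y - 1) * Real.exp (-M) ≤ Real.Gamma y := by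
  rw [Real.Gamma_eq_integral (by linarith)]
  have hi := Real.GammaIntegral_convergent (s := y) (by linarith)
  have hs : Set.Ioi M ⊆ Set.Ioi (0:ℝ) := Set.Ioi_subset_Ioi hM.le
  calc M ^ (y - 1) * Real.exp (-M) = ∫ x in Set.Ioi M, M ^ (y - 1) * Real.exp (-x) := by
        rw [integral_const_mul, integral_exp_neg_Ioi]
    _ ≤ ∫ x in Set.Ioi M, Real.exp (-x) * x ^ (y - 1) := by
        refine setIntegral_mono_on ((integrableOn_exp_neg_Ioi M).const_mul _) (hi.mono_set hs)
          measurableSet_Ioi fun x hx => ?_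
        rw [mul_comm]
        have : M ≤ x := le_of_lt hx
        gcongr
    _ ≤ _ := setIntegral_mono_set hi (ae_restrict_of_forall_mem measurableSet_Ioi fun x hx => by
        have : 0 < x := hx
        simp only [Pi.zero_apply]; positivity) hs.eventuallyLE

lemma ml_summable {β z : ℝ} (hβ : 0 < β) (hz : 0 < z) :
    Summable fun n : ℕ => z ^ ((n : ℝ) * β) / Real.Gamma ((n : ℝ) * β + 1) := by
  have hr : ((1 / 2 : ℝ) ^ β) < 1 := Real.rpow_lt_one (by norm_num) (by norm_num) hβ
  refine Summable.of_nonneg_of_le (fun n => ?_) (fun n => ?_)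
    ((summable_geometric_of_lt_one (by positivity) hr).mul_left (Real.exp (2 * z)))
  · have : 0 < Real.Gamma ((n : ℝ) * β + 1) := Real.Gamma_pos_of_pos (by positivity)
    positivity
  · have h := gamma_lower (M := 2 * z) (y := n * β + 1) (by positivity) (by
      have : 0 ≤ n * β := by positivity
      linarith)
    rw [div_le_iff₀ (Real.Gamma_pos_of_pos (by positivity))]
    refine le_trans (le_of_eq ?_) (mul_le_mul_of_nonneg_left h (by positivity))
    rw [add_sub_cancel_right, Real.mul_rpow (by norm_num) hz.le, ← Real.rpow_natCast,
      ← Real.rpow_mul (by norm_num), mul_comm β, Real.exp_neg]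
    have : (1 / 2 : ℝ) ^ (n * β) * 2 ^ (n * β) = 1 := by
      rw [← Real.mul_rpow (by norm_num) (by norm_num)]; norm_num
    have h2 := (Real.exp_pos (2 * z)).ne'
    field_simp
    linear_combination (-1 : ℝ) * this

lemma rem_tendsto {β z : ℝ} (hβ : 0 < β) (hz : 0 < z) :
    Filter.Tendsto (fun n : ℕ => z ^ ((n : ℝ) * β) / Real.Gamma ((n : ℝ) * β))
      Filter.atTop (nhds 0) := by
  have hr : ((1 / 2 : ℝ) ^ β) < 1 := Real.rpow_lt_one (by norm_num) (by norm_num) hβ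
  have ht := (tendsto_pow_atTop_nhds_zero_of_lt_one (by positivity) hr).const_mul
    (Real.exp (2 * z) * (2 * z))
  rw [mul_zero] at ht
  refine squeeze_zero' (Filter.Eventually.of_forall fun n => ?_) ?_ ht
  · have : 0 ≤ Real.Gamma ((n : ℝ) * β) := Real.Gamma_nonneg_of_nonneg (by positivity)
    positivity
  obtain ⟨N, hN⟩ := exists_nat_ge (1 / β)
  filter_upwards [Filter.eventually_ge_atTop N] with n hn
  have hn1 : 1 ≤ n * β := by
    have : (N : ℝ) ≤ n := by exact_mod_cast hn
    rw [← div_le_iff₀ hβ]; linarith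
  have h := gamma_lower (M := 2 * z) (by positivity) hn1
  rw [div_le_iff₀ (Real.Gamma_pos_of_pos (by linarith))]
  refine le_trans (le_of_eq ?_) (mul_le_mul_of_nonneg_left h (by positivity))
  rw [Real.rpow_sub_one (by positivity), Real.mul_rpow (by norm_num) hz.le, ← Real.rpow_natCast,
      ← Real.rpow_mul (by norm_num), mul_comm β, Real.exp_neg]
  have : (1 / 2 : ℝ) ^ (n * β) * 2 ^ (n * β) = 1 := by
      rw [← Real.mul_rpow (by norm_num) (by norm_num)]; norm_num
  have h2 := (Real.exp_pos (2 * z)).ne'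
  field_simp
  linear_combination (-1 : ℝ) * this

lemma lconv_mono (f : ℝ → ℝ≥0∞) {g h : ℝ → ℝ≥0∞} (H : ∀ x, g x ≤ h x) (x : ℝ) :
    (f ⋆ₗ[volume] g) x ≤ (f ⋆ₗ[volume] h) x := by
  simp only [lconvolution_def]
  exact lintegral_mono fun y => mul_le_mul_right (H _) _

lemma lconv_add {f g h : ℝ → ℝ≥0∞} (hf : Measurable f) (hg : Measurable g) :
    f ⋆ₗ[volume] (g + h) = f ⋆ₗ[volume] g + f ⋆ₗ[volume] h := by
  ext x
  simp only [lconvolution_def, Pi.add_apply, mul_add]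
  exact lintegral_add_left (by fun_prop) _

lemma lconv_smul {f g : ℝ → ℝ≥0∞} {c : ℝ≥0∞} (hc : c ≠ ∞) :
    f ⋆ₗ[volume] (c • g) = c • (f ⋆ₗ[volume] g) := by
  ext x
  simp only [lconvolution_def, Pi.smul_apply, smul_eq_mul]
  rw [← lintegral_const_mul' _ _ hc]
  simp_rw [mul_left_comm]

lemma iter {β : ℝ} (hβ : 0 < β) {A c : ℝ≥0∞} (hA : A ≠ ∞) (hc : c ≠ ∞) {V : ℝ → ℝ≥0∞}
    (hV : AEMeasurable V) (H : ∀ x, V x ≤ (A • hKer 1 + c • (hKer β ⋆ₗ[volume] V)) x) (n : ℕ) :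
    ∀ x, V x ≤ (A • ∑ k ∈ Finset.range (n + 1), c ^ k • hKer (k * β + 1)
      + c ^ (n + 1) • (hKer (((n + 1 : ℕ) : ℝ) * β) ⋆ₗ[volume] V)) x := by
  induction n with
  | zero => simpa using H
  | succ n ih =>
    intro x
    refine (H x).trans ?_
    have h1 := lconv_mono (hKer β) ih x
    have hM0 : ∀ m : ℕ, Measurable (∑ k ∈ Finset.range m, c ^ k • hKer (k * β + 1)) := fun m =>
      Finset.sum_induction _ Measurable (fun _ _ h1 h2 => h1.add h2) measurable_const
        fun k _ => (hKer_measurable (k * β + 1)).const_smul (c ^ k)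
    have hs : hKer β ⋆ₗ[volume] (∑ k ∈ Finset.range (n + 1), c ^ k • hKer (k * β + 1)) =
        ∑ k ∈ Finset.range (n + 1), c ^ k • hKer ((k + 1 : ℕ) * β + 1) := by
      induction n + 1 with
      | zero => simp
      | succ m im =>
        rw [Finset.sum_range_succ, lconv_add (hKer_measurable _), im, Finset.sum_range_succ,
          lconv_smul (by finiteness), hKer_conv hβ (by positivity)]
        · congr 3; push_cast; ring
        · exact hM0 _
    have hM : Measurable (A • ∑ k ∈ Finset.range (n + 1), c ^ k • hKer (k * β + 1)) :=
      (hM0 _).const_smul _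
    rw [lconv_add (hKer_measurable _) hM, lconv_smul hA, hs, lconv_smul (by finiteness),
      lconvolution_assoc₀ (hKer_measurable _).aemeasurable (hKer_measurable _).aemeasurable hV,
      hKer_conv hβ (by positivity)] at h1
    have e : β + ((n + 1 : ℕ) : ℝ) * β = ((n + 1 + 1 : ℕ) : ℝ) * β := by push_cast; ring
    rw [e] at h1
    rw [Finset.sum_range_succ']
    simp only [Pi.add_apply, Pi.smul_apply, smul_eq_mul, Finset.sum_apply] at h1 ⊢
    refine (add_le_add_right (mul_le_mul_right h1 c) _).trans (le_of_eq ?_)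
    simp only [pow_zero, Nat.cast_zero, zero_mul, zero_add, pow_succ, one_mul]
    have : ∑ k ∈ Finset.range (n + 1), c ^ k * c * hKer ((k + 1 : ℕ) * β + 1) x
      = c * ∑ k ∈ Finset.range (n + 1), c ^ k * hKer ((k + 1 : ℕ) * β + 1) x := by
      rw [Finset.mul_sum]; congr! 1; ring
    rw [this]
    ring

/-- The constant-inhomogeneity case of Henry's generalized Gronwall lemma: if
`u ≤ a + b ∫₀ᵗ (t−s)^{β−1}u(s)ds` on `[0,T)` with `a ≥ 0` constant, then with
`θ = (bΓ(β))^{1/β}` one has `u(t) ≤ a E_β(θt)` on `[0,T)`. -/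
theorem stmt_4 (b β T a : ℝ) (hb : 0 < b) (hβ : 0 < β) (hT : 0 < T) (ha : 0 ≤ a)
    (u : ℝ → ℝ)
    (hu_nonneg : ∀ t ∈ Set.Ico (0 : ℝ) T, 0 ≤ u t)
    (hu_int : ∀ t ∈ Set.Ico (0 : ℝ) T, IntervalIntegrable u MeasureTheory.volume 0 t)
    (hyp : ∀ t ∈ Set.Ico (0 : ℝ) T,
      u t ≤ a + b * ∫ s in (0 : ℝ)..t, (t - s) ^ (β - 1) * u s) :
    ∀ t ∈ Set.Ico (0 : ℝ) T,
      u t ≤ a * mittagLeffler β ((b * Real.Gamma β) ^ (1 / β) * t) := by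
  intro t ht
  have hG := Real.Gamma_pos_of_pos hβ
  rcases ht.1.eq_or_lt with h0 | h0
  · subst h0
    have h := hyp 0 ht
    simp only [intervalIntegral.integral_same, mul_zero, add_zero] at h
    have : mittagLeffler β ((b * Real.Gamma β) ^ (1 / β) * 0) = 1 := by
      unfold mittagLeffler
      rw [tsum_eq_single 0]
      · simp
      · intro n hn
        have : (n : ℝ) * β ≠ 0 := by
          have : (n : ℝ) ≠ 0 := by exact_mod_cast hn
          positivity
        rw [mul_zero, Real.zero_rpow this, zero_div]
    rw [this, mul_one]; exact h
  set c : ℝ := b * Real.Gamma β with hc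
  have hcpos : 0 < c := by positivity
  set z : ℝ := c ^ (1 / β) * t with hz
  have hzpos : 0 < z := by positivity
  have hzp : ∀ k : ℕ, z ^ ((k : ℝ) * β) = c ^ k * t ^ ((k : ℝ) * β) := by
    intro k
    rw [hz, Real.mul_rpow (by positivity) h0.le, ← Real.rpow_mul hcpos.le,
      ← Real.rpow_natCast]
    congr 2
    field_simp
  set V : ℝ → ℝ≥0∞ := (Set.Ioc 0 t).indicator (fun s => ENNReal.ofReal (u s)) with hVdef
  have hui : IntegrableOn u (Set.Ioc 0 t) := (hu_int t ht).1
  have hV : AEMeasurable V :=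
    (aemeasurable_indicator_iff measurableSet_Ioc).2 hui.aestronglyMeasurable.aemeasurable.ennreal_ofReal
  have hI : ∫⁻ s, V s ≠ ∞ := by
    rw [hVdef, lintegral_indicator measurableSet_Ioc]
    refine ne_of_lt (lt_of_le_of_lt (lintegral_mono fun s => ?_) hui.2)
    exact Real.ofReal_le_enorm _
  have H : ∀ x, V x ≤ (ENNReal.ofReal a • hKer 1 +
      ENNReal.ofReal c • (hKer β ⋆ₗ[volume] V)) x := by
    intro x
    by_cases hx : x ∈ Set.Ioc 0 t
    swap
    · simp [hVdef, hx]
    have hxT : x ∈ Set.Ico 0 T := ⟨hx.1.le, hx.2.trans_lt ht.2⟩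
    have h := hyp x hxT
    rw [hVdef, Set.indicator_of_mem hx, ← hVdef]
    have e1 : hKer 1 x = 1 := by simp [hKer, hx.1]
    simp only [Pi.add_apply, Pi.smul_apply, smul_eq_mul, e1, mul_one]
    refine (ENNReal.ofReal_le_ofReal h).trans (ENNReal.ofReal_add_le.trans ?_)
    gcongr
    rw [ENNReal.ofReal_mul hb.le, hc, ENNReal.ofReal_mul hb.le, mul_assoc]
    gcongr
    rw [intervalIntegral.integral_of_le hx.1.le, lconvolution_comm, lconvolution_def,
      ← lintegral_const_mul' _ _ ENNReal.ofReal_ne_top, integral_Ioc_eq_integral_Ioo]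
    refine (Real.ofReal_le_enorm _).trans ((enorm_integral_le_lintegral_enorm _).trans ?_)
    rw [← lintegral_indicator measurableSet_Ioo]
    refine lintegral_mono fun s => ?_
    by_cases hs : s ∈ Set.Ioo 0 x
    swap
    · simp [hs]
    have hst : s ∈ Set.Ioc 0 t := ⟨hs.1, hs.2.le.trans hx.2⟩
    have hu0 := hu_nonneg s ⟨hs.1.le, hst.2.trans_lt ht.2⟩
    have hxs : 0 < x - s := sub_pos.2 hs.2
    have hxs' : 0 < -s + x := by linarith
    rw [Set.indicator_of_mem hs, hVdef, Set.indicator_of_mem hst, hKer, if_pos hxs',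
      Real.enorm_of_nonneg (by positivity), ← ENNReal.ofReal_mul hu0, ← ENNReal.ofReal_mul hG.le]
    apply ENNReal.ofReal_le_ofReal
    rw [neg_add_eq_sub]
    apply le_of_eq
    field_simp
  have hsum := ml_summable hβ hzpos
  have key : ∀ᶠ n : ℕ in Filter.atTop, V t ≤ ENNReal.ofReal (a * mittagLeffler β z) +
      ENNReal.ofReal (z ^ (((n + 1 : ℕ) : ℝ) * β) / Real.Gamma (((n + 1 : ℕ) : ℝ) * β) / t)
        * ∫⁻ s, V s := by
    obtain ⟨N, hN⟩ := exists_nat_ge (1 / β)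
    filter_upwards [Filter.eventually_ge_atTop N] with n hn
    have hn1 : 1 ≤ ((n + 1 : ℕ) : ℝ) * β := by
      have : (N : ℝ) ≤ n := by exact_mod_cast hn
      rw [← div_le_iff₀ hβ]; push_cast; linarith
    refine (iter hβ ENNReal.ofReal_ne_top ENNReal.ofReal_ne_top hV H n t).trans ?_
    simp only [Pi.add_apply, Pi.smul_apply, smul_eq_mul, Finset.sum_apply]
    refine add_le_add ?_ ?_
    · rw [ENNReal.ofReal_mul ha]
      gcongr
      have e : ∀ k ∈ Finset.range (n + 1), ENNReal.ofReal c ^ k * hKer (k * β + 1) t =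
          ENNReal.ofReal (z ^ ((k : ℝ) * β) / Real.Gamma ((k : ℝ) * β + 1)) := by
        intro k _
        rw [hKer, if_pos h0, ← ENNReal.ofReal_pow hcpos.le, ← ENNReal.ofReal_mul (by positivity),
          hzp, add_sub_cancel_right, mul_div_assoc]
      have hnn : ∀ k : ℕ, 0 ≤ z ^ ((k : ℝ) * β) / Real.Gamma ((k : ℝ) * β + 1) := fun k => by
        have : 0 < Real.Gamma ((k : ℝ) * β + 1) := Real.Gamma_pos_of_pos (by positivity)
        positivity
      rw [Finset.sum_congr rfl e, ← ENNReal.ofReal_sum_of_nonneg fun k _ => hnn k]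
      exact ENNReal.ofReal_le_ofReal (hsum.sum_le_tsum _ fun k _ => hnn k)
    · have hGm : 0 < Real.Gamma (((n + 1 : ℕ) : ℝ) * β) := Real.Gamma_pos_of_pos (by linarith)
      rw [hzp, lconvolution_comm, lconvolution_def]
      have e : c ^ (n + 1) * t ^ (((n + 1 : ℕ) : ℝ) * β) / Real.Gamma (((n + 1 : ℕ) : ℝ) * β) / t =
          c ^ (n + 1) * (t ^ (((n + 1 : ℕ) : ℝ) * β - 1) / Real.Gamma (((n + 1 : ℕ) : ℝ) * β)) := by
        rw [Real.rpow_sub_one h0.ne']; field_simp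
      rw [e, ENNReal.ofReal_mul (p := c ^ (n + 1)) (by positivity), ENNReal.ofReal_pow hcpos.le, mul_assoc]
      gcongr
      rw [← lintegral_const_mul' _ _ ENNReal.ofReal_ne_top]
      refine lintegral_mono fun s => ?_
      rw [mul_comm]
      by_cases hs : s ∈ Set.Ioc 0 t
      swap
      · simp [hVdef, hs]
      gcongr
      unfold hKer
      split_ifs with hp
      · apply ENNReal.ofReal_le_ofReal
        gcongr
        · linarith [hs.1]
      · exact zero_le
  have hrem := ((rem_tendsto hβ hzpos).comp (Filter.tendsto_add_atTop_nat 1)).div_const t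
  rw [zero_div] at hrem
  have hrem2 := ENNReal.Tendsto.mul_const (ENNReal.tendsto_ofReal hrem) (b := ∫⁻ s, V s) (Or.inr hI)
  rw [ENNReal.ofReal_zero, zero_mul] at hrem2
  have hlim := hrem2.const_add (ENNReal.ofReal (a * mittagLeffler β z))
  rw [add_zero] at hlim
  have hfin := ge_of_tendsto hlim key
  rw [hVdef, Set.indicator_of_mem (Set.right_mem_Ioc.2 h0)] at hfin
  refine (ENNReal.ofReal_le_ofReal_iff (mul_nonneg ha (tsum_nonneg fun k => ?_))).1 hfin
  have : 0 < Real.Gamma ((k : ℝ) * β + 1) := Real.Gamma_pos_of_pos (by positivity)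
  positivity
end
end

section
/- Let F : H → H be Lipschitz continuous, let T > 0, let g : [0,T] → H be continuous, and let x ∈ H. Then there exists a unique continuous function y : [0,T] → H such that for all t ∈ [0,T], y(t) = S(t)x + ∫₀ᵗ K(t−s) F(y(s)) ds + g(t), where the integral is a Bochner integral (which exists since ‖K(τ)‖ ≤ (2e)^{−1/2} e^{−τ} τ^{−1/2}). -/
open Real MeasureTheory

noncomputable section

/-- `H = ℓ²(ℤ; ℝ)`, modelling `2π`-periodic `L²` functions via the trigonometric
orthonormal basis. -/
abbrev H : Type := lp (fun _ : ℤ => ℝ) 2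

lemma volt_aesm {E : Type*} [NormedAddCommGroup E] [NormedSpace ℝ E]
    (Q : ℝ → E →L[ℝ] E) (hQ : ContinuousOn Q (Set.Ioi 0)) (T : ℝ) (φ : ℝ → E) (hφ : Continuous φ) (t : ℝ) :
    AEStronglyMeasurable (fun r => Q r (φ (t - r))) (volume.restrict (Set.Ioc 0 T)) := by
  have h1 : ContinuousOn (fun r => Q r (φ (t - r))) (Set.Ioc 0 T) :=
    (hQ.mono (fun r hr => hr.1)).clm_apply (by fun_prop)
  exact h1.aestronglyMeasurable measurableSet_Ioc

lemma volt_int {E : Type*} [NormedAddCommGroup E] [NormedSpace ℝ E]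
    (Q : ℝ → E →L[ℝ] E) (hQ : ContinuousOn Q (Set.Ioi 0)) (b : ℝ → ℝ) (T : ℝ)
    (hb : ∀ r, 0 < r → ‖Q r‖ ≤ b r) (hbi : IntegrableOn b (Set.Ioc 0 T))
    (φ : ℝ → E) (hφ : Continuous φ) (M : ℝ) (hM : ∀ s, ‖φ s‖ ≤ M) (t : ℝ) :
    IntegrableOn (fun r => Q r (φ (t - r))) (Set.Ioc 0 T) := by
  refine Integrable.mono' (hbi.mul_const M) (volt_aesm Q hQ T φ hφ t) ?_
  refine (ae_restrict_iff' measurableSet_Ioc).2 (Filter.Eventually.of_forall fun r hr => ?_)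
  exact (Q r).le_of_opNorm_le_of_le (hb r hr.1) (hM _)

lemma volt_subst {E : Type*} [NormedAddCommGroup E] [NormedSpace ℝ E]
    (Q : ℝ → E →L[ℝ] E) (φ : ℝ → E) (t : ℝ) :
    ∫ s in (0:ℝ)..t, Q (t - s) (φ s) = ∫ r in (0:ℝ)..t, Q r (φ (t - r)) := by
  have := intervalIntegral.integral_comp_sub_left (a := 0) (b := t) (fun r => Q r (φ (t - r))) t
  simpa using this

lemma volt_cont {E : Type*} [NormedAddCommGroup E] [NormedSpace ℝ E]
    (Q : ℝ → E →L[ℝ] E) (hQ : ContinuousOn Q (Set.Ioi 0)) (b : ℝ → ℝ) (T : ℝ)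
    (hb : ∀ r, 0 < r → ‖Q r‖ ≤ b r) (hbi : IntegrableOn b (Set.Ioc 0 T))
    (φ : ℝ → E) (hφ : Continuous φ) (M : ℝ) (hM : ∀ s, ‖φ s‖ ≤ M) :
    ContinuousOn (fun t => ∫ s in (0:ℝ)..t, Q (t - s) (φ s)) (Set.Icc 0 T) := by
  have key : Continuous (fun t => ∫ r in Set.Ioc 0 T,
      (Set.Iio t).indicator (fun r => Q r (φ (t - r))) r) := by
    rw [continuous_iff_continuousAt]
    intro t₀
    refine continuousAt_of_dominated (bound := fun r => b r * M) ?_ ?_ (hbi.mul_const M) ?_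
    · exact Filter.Eventually.of_forall fun t =>
        (volt_aesm Q hQ T φ hφ t).indicator measurableSet_Iio
    · refine Filter.Eventually.of_forall fun t => ?_
      refine (ae_restrict_iff' measurableSet_Ioc).2 (Filter.Eventually.of_forall fun r hr => ?_)
      exact (norm_indicator_le_norm_self _ _).trans
        ((Q r).le_of_opNorm_le_of_le (hb r hr.1) (hM _))
    · have h0 : ∀ᵐ r : ℝ, r ≠ t₀ := Measure.ae_ne _ _
      refine ae_restrict_of_ae ?_
      filter_upwards [h0] with r hr
      rcases lt_or_gt_of_ne hr with h | h
      · have : (fun t => Q r (φ (t - r))) =ᶠ[nhds t₀]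
            (fun t => (Set.Iio t).indicator (fun r => Q r (φ (t - r))) r) := by
          filter_upwards [lt_mem_nhds h] with t ht
          rw [Set.indicator_of_mem]; exact ht
        refine ContinuousAt.congr ?_ this
        fun_prop
      · have : (fun t => (0:E)) =ᶠ[nhds t₀]
            (fun t => (Set.Iio t).indicator (fun r => Q r (φ (t - r))) r) := by
          filter_upwards [gt_mem_nhds h] with t ht
          rw [Set.indicator_of_notMem]; simpa using ht.le
        exact ContinuousAt.congr continuousAt_const this
  refine key.continuousOn.congr fun t ht => ?_
  show (∫ s in (0:ℝ)..t, Q (t - s) (φ s)) = ∫ r in Set.Ioc 0 T,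
      (Set.Iio t).indicator (fun r => Q r (φ (t - r))) r
  rw [volt_subst, intervalIntegral.integral_of_le ht.1, setIntegral_indicator measurableSet_Iio,
    integral_Ioc_eq_integral_Ioo]
  congr 2
  ext r
  simp only [Set.mem_Ioo, Set.mem_inter_iff, Set.mem_Ioc, Set.mem_Iio]
  constructor
  · rintro ⟨h1, h2⟩; exact ⟨⟨h1, h2.le.trans ht.2⟩, h2⟩
  · rintro ⟨⟨h1, _⟩, h2⟩; exact ⟨h1, h2⟩

lemma volt_diff {E : Type*} [NormedAddCommGroup E] [NormedSpace ℝ E]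
    (Q : ℝ → E →L[ℝ] E) (hQ : ContinuousOn Q (Set.Ioi 0)) (b : ℝ → ℝ) (T : ℝ)
    (hb : ∀ r, 0 < r → ‖Q r‖ ≤ b r) (hbi : IntegrableOn b (Set.Ioi 0))
    (φ ψ : ℝ → E) (hφ : Continuous φ) (hψ : Continuous ψ)
    (M N : ℝ) (hM : ∀ s, ‖φ s‖ ≤ M) (hN : ∀ s, ‖ψ s‖ ≤ N) (D : ℝ) (hD : ∀ s, ‖φ s - ψ s‖ ≤ D)
    (t : ℝ) (ht : t ∈ Set.Icc 0 T) :
    ‖(∫ s in (0:ℝ)..t, Q (t - s) (φ s)) - ∫ s in (0:ℝ)..t, Q (t - s) (ψ s)‖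
      ≤ (∫ r in Set.Ioi 0, b r) * D := by
  have hD0 : 0 ≤ D := (norm_nonneg _).trans (hD 0)
  have hbi' : IntegrableOn b (Set.Ioc 0 t) := hbi.mono_set (fun r hr => hr.1)
  rw [volt_subst, volt_subst, intervalIntegral.integral_of_le ht.1,
    intervalIntegral.integral_of_le ht.1,
    ← integral_sub (volt_int Q hQ b t hb hbi' φ hφ M hM t) (volt_int Q hQ b t hb hbi' ψ hψ N hN t)]
  calc _ ≤ ∫ r in Set.Ioc 0 t, b r * D := by
        refine norm_integral_le_of_norm_le (hbi'.mul_const D) ?_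
        refine (ae_restrict_iff' measurableSet_Ioc).2 (Filter.Eventually.of_forall fun r hr => ?_)
        rw [← map_sub]
        exact (Q r).le_of_opNorm_le_of_le (hb r hr.1) (hD _)
    _ ≤ ∫ r in Set.Ioi 0, b r * D := by
        refine setIntegral_mono_set (hbi.mul_const D) ?_ ?_
        · refine (ae_restrict_iff' measurableSet_Ioi).2 (Filter.Eventually.of_forall fun r hr => ?_)
          exact mul_nonneg ((norm_nonneg _).trans (hb r hr)) hD0
        · exact (Filter.Eventually.of_forall fun r (hr : r ∈ Set.Ioc 0 t) => hr.1)
    _ = _ := integral_mul_const _ _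

lemma gam (l : ℝ) (hl : 0 < l) : IntegrableOn (fun r : ℝ => r ^ (-(1/2) : ℝ) * rexp (-(l * r))) (Set.Ioi 0) ∧
   ∫ r in Set.Ioi (0:ℝ), r ^ (-(1/2) : ℝ) * rexp (-(l * r)) = √(π / l) := by
  constructor
  · have := integrableOn_rpow_mul_exp_neg_mul_rpow (p := 1) (s := -(1/2)) (b := l) (by norm_num) one_pos hl
    simpa using this
  · have := Real.integral_rpow_mul_exp_neg_mul_Ioi (a := 1/2) (r := l) (by norm_num) hl
    rw [Real.Gamma_one_half_eq] at this
    rw [show (-(1/2) : ℝ) = 1/2 - 1 by norm_num, this, ← Real.sqrt_eq_rpow, ← Real.sqrt_mul (by positivity)]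
    congr 1; ring

theorem abstract_volt {E : Type*} [NormedAddCommGroup E] [NormedSpace ℝ E] [CompleteSpace E]
    (K : ℝ → E →L[ℝ] E) (hK : ContinuousOn K (Set.Ioi 0))
    (hb : ∀ r, 0 < r → ‖K r‖ ≤ r ^ (-(1/2) : ℝ))
    (F : E → E) (L : NNReal) (hF : LipschitzWith L F) (T : ℝ) (hT : 0 < T)
    (h : ℝ → E) (hh : ContinuousOn h (Set.Icc 0 T)) :
    ∃ y : ℝ → E,
      (ContinuousOn y (Set.Icc 0 T) ∧
        ∀ t ∈ Set.Icc (0 : ℝ) T, y t = h t + ∫ s in (0 : ℝ)..t, K (t - s) (F (y s))) ∧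
      ∀ z : ℝ → E,
        (ContinuousOn z (Set.Icc 0 T) ∧
          ∀ t ∈ Set.Icc (0 : ℝ) T, z t = h t + ∫ s in (0 : ℝ)..t, K (t - s) (F (z s))) →
        ∀ t ∈ Set.Icc (0 : ℝ) T, z t = y t := by
  obtain ⟨l, hl, hlL⟩ : ∃ l : ℝ, 0 < l ∧ √(π / l) * L ≤ 1 / 2 := by
    refine ⟨4 * π * (L + 1) ^ 2, by positivity, ?_⟩
    have : π / (4 * π * ((L:ℝ) + 1) ^ 2) = (1 / (2 * (L + 1))) ^ 2 := by
      field_simp; norm_num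
    rw [this, Real.sqrt_sq (by positivity), one_div_mul_eq_div, div_le_div_iff₀ (by positivity) (by norm_num)]
    linarith
  have hFc := hF.continuous
  obtain ⟨hbi, hbv⟩ := gam l hl
  set b : ℝ → ℝ := fun r => r ^ (-(1/2) : ℝ) * rexp (-(l * r)) with hbdef
  set Q : ℝ → E →L[ℝ] E := fun r => rexp (-(l * r)) • K r with hQdef
  have hQ : ContinuousOn Q (Set.Ioi 0) := ContinuousOn.smul (f := fun r => rexp (-(l * r))) (by fun_prop) hK
  have hQb : ∀ r, 0 < r → ‖Q r‖ ≤ b r := by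
    intro r hr
    rw [hQdef, hbdef]
    simp only [norm_smul, Real.norm_eq_abs, abs_exp]
    rw [mul_comm]
    gcongr
    exact hb r hr
  have hbiT : IntegrableOn b (Set.Ioc 0 T) := hbi.mono_set (fun r hr => hr.1)
  let n : C(Set.Icc 0 T, E) → C(Set.Icc 0 T, E) := fun u =>
    ⟨fun s => rexp (-(l * s)) • F (rexp (l * s) • u s), by fun_prop⟩
  have hn : ∀ u v s, ‖n u s - n v s‖ ≤ L * dist u v := by
    intro u v s
    have h1 : ‖F (rexp (l * s) • u s) - F (rexp (l * s) • v s)‖ ≤ L * (rexp (l * s) * dist u v) := by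
      rw [← dist_eq_norm]
      refine (hF.dist_le_mul _ _).trans ?_
      rw [dist_eq_norm, ← smul_sub, norm_smul, Real.norm_eq_abs, abs_exp, ← dist_eq_norm]
      gcongr
      exact ContinuousMap.dist_apply_le_dist s
    have h2 : n u s - n v s = rexp (-(l * s)) • (F (rexp (l * s) • u s) - F (rexp (l * s) • v s)) := by
      rw [smul_sub]; rfl
    rw [h2, norm_smul, Real.norm_eq_abs, abs_exp]
    calc _ ≤ rexp (-(l * s)) * (L * (rexp (l * s) * dist u v)) := by gcongr
      _ = (rexp (-(l * s)) * rexp (l * s)) * (L * dist u v) := by ring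
      _ = _ := by rw [← Real.exp_add]; simp
  let p : C(Set.Icc 0 T, E) → ℝ → E := fun u => Set.IccExtend hT.le (n u)
  have hp : ∀ u, Continuous (p u) := fun u => (n u).continuous.Icc_extend'
  have hpM : ∀ u s, ‖p u s‖ ≤ ‖n u‖ := fun u s => (n u).norm_coe_le_norm _
  have hpe : ∀ u, ∀ s (hs : s ∈ Set.Icc 0 T), p u s = rexp (-(l * s)) • F (rexp (l * s) • u ⟨s, hs⟩) := by
    intro u s hs
    exact Set.IccExtend_of_mem hT.le (n u) hs
  have hVc : ∀ u, ContinuousOn (fun t => rexp (-(l * t)) • h t + ∫ s in (0:ℝ)..t, Q (t - s) (p u s))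
      (Set.Icc 0 T) := fun u => (ContinuousOn.smul (f := fun r => rexp (-(l * r))) (by fun_prop) hh).add
        (volt_cont Q hQ b T hQb hbiT (p u) (hp u) _ (hpM u))
  let Φ : C(Set.Icc 0 T, E) → C(Set.Icc 0 T, E) := fun u =>
    ⟨_, continuousOn_iff_continuous_restrict.1 (hVc u)⟩
  have hΦ : ∀ u (t : Set.Icc 0 T), Φ u t = rexp (-(l * t)) • h t + ∫ s in (0:ℝ)..t, Q (t - s) (p u s) :=
    fun _ _ => rfl
  have hcon : ContractingWith (1/2) Φ := by
    refine ⟨by rw [← NNReal.coe_lt_coe]; norm_num, LipschitzWith.of_dist_le_mul fun u v => ?_⟩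
    rw [ContinuousMap.dist_le (by positivity)]
    intro t
    rw [hΦ, hΦ, dist_eq_norm, add_sub_add_left_eq_sub]
    refine (volt_diff Q hQ b T hQb hbi (p u) (p v) (hp u) (hp v) _ _ (hpM u) (hpM v) (L * dist u v)
      (fun s => hn u v _) t t.2).trans ?_
    rw [hbv, ← mul_assoc]
    gcongr
    simpa using hlL
  have heq : ∀ (w : ℝ → E) (u : C(Set.Icc 0 T, E)), (∀ s : Set.Icc 0 T, w s = rexp (l * s) • u s) →
      (Φ u = u ↔ ∀ t ∈ Set.Icc (0 : ℝ) T, w t = h t + ∫ s in (0 : ℝ)..t, K (t - s) (F (w s))) := by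
    intro w u hw
    have hint : ∀ t : Set.Icc 0 T, Φ u t =
        rexp (-(l * t)) • (h t + ∫ s in (0 : ℝ)..t, K (t - s) (F (w s))) := by
      intro t
      rw [hΦ, smul_add, ← intervalIntegral.integral_smul]
      congr 1
      refine intervalIntegral.integral_congr fun s hs => ?_
      rw [Set.uIcc_of_le t.2.1] at hs
      have hs' : s ∈ Set.Icc 0 T := ⟨hs.1, hs.2.trans t.2.2⟩
      show Q (t - s) (p u s) = rexp (-(l * t)) • K (t - s) (F (w s))
      rw [hpe u s hs', hw ⟨s, hs'⟩, hQdef]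
      simp only [ContinuousLinearMap.smul_apply, map_smul, smul_smul, ← Real.exp_add]
      congr 2
      ring
    have hinv : ∀ (t : ℝ) (a c : E), (rexp (-(l * t)) • a = c ↔ rexp (l * t) • c = a) := by
      intro t a c
      constructor
      · rintro rfl; rw [smul_smul, ← Real.exp_add]; simp
      · rintro rfl; rw [smul_smul, ← Real.exp_add]; simp
    constructor
    · intro hu t ht
      have := hint ⟨t, ht⟩
      rw [hu] at this
      rw [hw ⟨t, ht⟩]
      exact (hinv _ _ _).1 this.symm
    · intro hu
      ext t
      rw [hint t, hinv, ← hw t, hu t t.2]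
  obtain ⟨u, hu⟩ : ∃ u, Φ u = u := ⟨_, hcon.fixedPoint_isFixedPt⟩
  have hye : ∀ s : Set.Icc 0 T, (fun s => rexp (l * s) • Set.IccExtend hT.le u s) (s:ℝ) = rexp (l * s) • u s := by
    intro s; simp
  refine ⟨fun s => rexp (l * s) • Set.IccExtend hT.le u s, ⟨?_, (heq _ u hye).1 hu⟩, ?_⟩
  · have := u.continuous.Icc_extend' (h := hT.le)
    exact Continuous.continuousOn (by fun_prop)
  · rintro z ⟨hz, hze⟩ t ht
    let v : C(Set.Icc 0 T, E) := ⟨_, continuousOn_iff_continuous_restrict.1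
      (ContinuousOn.smul (f := fun s => rexp (-(l * s))) (by fun_prop) hz)⟩
    have hv : ∀ s : Set.Icc 0 T, z s = rexp (l * s) • v s := by
      intro s
      show z s = rexp (l * s) • rexp (-(l * s)) • z s
      rw [smul_smul, ← Real.exp_add]; simp
    have h1 : Φ v = v := (heq z v hv).2 hze
    have h2 : v = u := hcon.fixedPoint_unique' h1 hu
    rw [hv ⟨t, ht⟩, h2, ← hye ⟨t, ht⟩]

lemma H_hasSum (x : H) : HasSum (fun k => (x k) ^ 2) (‖x‖ ^ 2) := by
  have := lp.hasSum_norm (p := 2) (by norm_num) x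
  simpa using this

lemma H_bound (x y : H) (c : ℝ) (hc : 0 ≤ c) (h : ∀ k, |y k| ≤ c * |x (-k)|) : ‖y‖ ≤ c * ‖x‖ := by
  have h1 := (Equiv.neg ℤ).hasSum_iff.2 (H_hasSum x)
  have h2 := h1.mul_left (c ^ 2)
  have h3 := hasSum_le (fun k => ?_) (H_hasSum y) h2
  · rw [← mul_pow] at h3
    exact (pow_le_pow_iff_left₀ (norm_nonneg _) (by positivity) two_ne_zero).1 h3
  · have := pow_le_pow_left₀ (abs_nonneg _) (h k) 2
    rw [mul_pow, sq_abs, sq_abs] at this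
    simpa using this

lemma S_cont (S : ℝ → H →L[ℝ] H)
    (hS : ∀ t : ℝ, 0 ≤ t → ∀ (x : H) (k : ℤ),
      (S t x) k = Real.exp (-(1 + (k : ℝ) ^ 2) * t) * x k) (x : H) (T : ℝ) :
    ContinuousOn (fun t => S t x) (Set.Icc 0 T) := by
  intro t₀ ht₀
  rw [ContinuousWithinAt, tendsto_iff_norm_sub_tendsto_zero]
  have h2 : Filter.Tendsto (fun t => ‖S t x - S t₀ x‖ ^ 2) (nhdsWithin t₀ (Set.Icc 0 T)) (nhds 0) := by
    have h3 : Filter.Tendsto (fun t => ∑' k : ℤ, ((rexp (-(1 + (k : ℝ) ^ 2) * t)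
        - rexp (-(1 + (k : ℝ) ^ 2) * t₀)) * x k) ^ 2)
        (nhdsWithin t₀ (Set.Icc 0 T)) (nhds (∑' k : ℤ, 0)) := by
      refine tendsto_tsum_of_dominated_convergence (bound := fun k => (x k) ^ 2)
        (H_hasSum x).summable ?_ ?_
      · intro k
        have : Continuous (fun t => ((rexp (-(1 + (k : ℝ) ^ 2) * t)
          - rexp (-(1 + (k : ℝ) ^ 2) * t₀)) * x k) ^ 2) := by fun_prop
        have h4 := (this.tendsto t₀).mono_left (nhdsWithin_le_nhds (s := Set.Icc 0 T))
        simpa using h4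
      · filter_upwards [self_mem_nhdsWithin] with t ht k
        rw [Real.norm_eq_abs, abs_pow, sq_abs, mul_pow]
        have e1 : ∀ s, 0 ≤ s → rexp (-(1 + (k : ℝ) ^ 2) * s) ≤ 1 := by
          intro s hs
          rw [Real.exp_le_one_iff]; nlinarith [sq_nonneg (k:ℝ), mul_nonneg (sq_nonneg (k:ℝ)) hs]
        have a1 := e1 t ht.1
        have a2 := e1 t₀ ht₀.1
        have a3 := Real.exp_pos (-(1 + (k : ℝ) ^ 2) * t)
        have a4 := Real.exp_pos (-(1 + (k : ℝ) ^ 2) * t₀)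
        refine mul_le_of_le_one_left (sq_nonneg _) ?_
        rw [sq_le_one_iff_abs_le_one, abs_le]
        constructor <;> linarith
    rw [tsum_zero] at h3
    refine h3.congr' ?_
    filter_upwards [self_mem_nhdsWithin] with t ht
    rw [← (H_hasSum (S t x - S t₀ x)).tsum_eq]
    congr 1; ext k
    rw [lp.coeFn_sub, Pi.sub_apply, hS t ht.1, hS t₀ ht₀.1, sub_mul]
  have h5 := h2.sqrt
  simpa [Real.sqrt_sq] using h5

lemma K_bound (K : ℝ → H →L[ℝ] H)
    (hK : ∀ t : ℝ, 0 < t → ∀ (x : H) (k : ℤ),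
      (K t x) k = -(k : ℝ) * Real.exp (-(1 + (k : ℝ) ^ 2) * t) * x (-k)) (r : ℝ) (hr : 0 < r) :
    ‖K r‖ ≤ r ^ (-(1/2) : ℝ) := by
  refine ContinuousLinearMap.opNorm_le_bound _ (by positivity) fun x => ?_
  refine H_bound _ _ _ (by positivity) fun k => ?_
  rw [hK r hr, abs_mul, abs_mul, abs_neg, abs_exp]
  gcongr
  rw [Real.rpow_neg hr.le, ← Real.sqrt_eq_rpow, ← one_div, le_div_iff₀ (by positivity)]
  have h1 : |(k:ℝ)| * √r ≤ rexp ((1 + (k : ℝ) ^ 2) * r) := by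
    have h2 := Real.add_one_le_exp ((1 + (k : ℝ) ^ 2) * r)
    have h3 : (|(k:ℝ)| * √r) ^ 2 = (k:ℝ) ^ 2 * r := by rw [mul_pow, sq_abs, Real.sq_sqrt hr.le]
    nlinarith [sq_nonneg (|(k:ℝ)| * √r - 1)]
  calc _ = (|(k:ℝ)| * √r) * rexp (-(1 + (k : ℝ) ^ 2) * r) := by ring
    _ ≤ rexp ((1 + (k : ℝ) ^ 2) * r) * rexp (-(1 + (k : ℝ) ^ 2) * r) := by gcongr
    _ = 1 := by rw [← Real.exp_add, neg_mul, add_neg_cancel, Real.exp_zero]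

lemma exp_diff (a m r s : ℝ) (ha : 0 ≤ a) (hr : m ≤ r) (hs : m ≤ s) :
    |rexp (-a * r) - rexp (-a * s)| ≤ a * rexp (-a * m) * |r - s| := by
  wlog h : r ≤ s generalizing r s
  · rw [abs_sub_comm, abs_sub_comm r]; exact this s r hs hr (le_of_not_ge h)
  have h1 : rexp (-a * s) ≤ rexp (-a * r) := Real.exp_le_exp.2 (by nlinarith)
  rw [abs_of_nonneg (by linarith), abs_sub_comm, abs_of_nonneg (by linarith)]
  have h2 : rexp (-a * s) = rexp (-a * r) * rexp (-(a * (s - r))) := by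
    rw [← Real.exp_add]; congr 1; ring
  have h3 := Real.add_one_le_exp (-(a * (s - r)))
  have h4 : rexp (-a * r) ≤ rexp (-a * m) := Real.exp_le_exp.2 (by nlinarith)
  have h5 : 0 ≤ a * (s - r) := mul_nonneg ha (by linarith)
  rw [h2]
  calc _ = rexp (-a * r) * (1 - rexp (-(a * (s - r)))) := by ring
    _ ≤ rexp (-a * r) * (a * (s - r)) := by gcongr; linarith
    _ ≤ rexp (-a * m) * (a * (s - r)) := by gcongr
    _ = _ := by ring

lemma K_cont (K : ℝ → H →L[ℝ] H)
    (hK : ∀ t : ℝ, 0 < t → ∀ (x : H) (k : ℤ),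
      (K t x) k = -(k : ℝ) * Real.exp (-(1 + (k : ℝ) ^ 2) * t) * x (-k)) :
    ContinuousOn K (Set.Ioi 0) := by
  have key : ∀ m r s : ℝ, 0 < m → m ≤ r → m ≤ s → ‖K r - K s‖ ≤ 2 / m ^ 2 * |r - s| := by
    intro m r s hm hr hs
    refine ContinuousLinearMap.opNorm_le_bound _ (by positivity) fun x => ?_
    refine H_bound _ _ _ (by positivity) fun k => ?_
    rw [sub_apply, lp.coeFn_sub, Pi.sub_apply, hK r (hm.trans_le hr),
      hK s (hm.trans_le hs), ← sub_mul, ← mul_sub, abs_mul, abs_mul, abs_neg]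
    refine mul_le_mul_of_nonneg_right ?_ (abs_nonneg _)
    set a : ℝ := 1 + (k:ℝ) ^ 2 with ha
    have ha0 : 0 ≤ a := by positivity
    have hka : |(k:ℝ)| ≤ a := by
      rw [ha, ← sq_abs]; nlinarith [sq_nonneg (|(k:ℝ)| - 1), abs_nonneg (k:ℝ)]
    have h1 := exp_diff a m r s ha0 hr hs
    have h2 := Real.quadratic_le_exp_of_nonneg (x := a * m) (by positivity)
    have h3 : a * a * rexp (-a * m) ≤ 2 / m ^ 2 := by
      rw [neg_mul, Real.exp_neg, ← div_eq_mul_inv, div_le_div_iff₀ (by positivity) (by positivity)]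
      nlinarith [mul_nonneg ha0 hm.le]
    calc _ ≤ a * (a * rexp (-a * m) * |r - s|) := by gcongr
      _ = a * a * rexp (-a * m) * |r - s| := by ring
      _ ≤ _ := by gcongr
  intro s hs
  have hs : 0 < s := hs
  refine ContinuousAt.continuousWithinAt ?_
  rw [ContinuousAt, tendsto_iff_norm_sub_tendsto_zero]
  refine squeeze_zero' (g := fun r => 2 / (s / 2) ^ 2 * |r - s|)
    (Filter.Eventually.of_forall fun _ => norm_nonneg _) ?_ ?_
  · filter_upwards [lt_mem_nhds (show s / 2 < s by linarith)] with r hr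
    exact key (s/2) r s (by positivity) hr.le (by linarith)
  · have : Continuous (fun r => 2 / (s / 2) ^ 2 * |r - s|) := by fun_prop
    simpa using this.tendsto s

/-- Existence and uniqueness of the (pathwise) mild solution: if `S(t)` is the semigroup
`(S(t)x)_k = e^{−(1+k²)t} x_k`, `K(t)` is the operator `(K(t)x)_k = −k e^{−(1+k²)t} x_{−k}`,
`F : H → H` is Lipschitz, `g : [0,T] → H` is continuous and `x ∈ H`, then there is a unique
continuous `y : [0,T] → H` with `y(t) = S(t)x + ∫₀ᵗ K(t−s) F(y(s)) ds + g(t)` on `[0,T]`. -/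
theorem stmt_7 (S K : ℝ → H →L[ℝ] H)
    (hS : ∀ t : ℝ, 0 ≤ t → ∀ (x : H) (k : ℤ),
      (S t x) k = Real.exp (-(1 + (k : ℝ) ^ 2) * t) * x k)
    (hK : ∀ t : ℝ, 0 < t → ∀ (x : H) (k : ℤ),
      (K t x) k = -(k : ℝ) * Real.exp (-(1 + (k : ℝ) ^ 2) * t) * x (-k))
    (F : H → H) (hF : ∃ L : NNReal, LipschitzWith L F)
    (T : ℝ) (hT : 0 < T)
    (g : ℝ → H) (hg : ContinuousOn g (Set.Icc 0 T)) (x : H) :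
    ∃ y : ℝ → H,
      (ContinuousOn y (Set.Icc 0 T) ∧
        ∀ t ∈ Set.Icc (0 : ℝ) T,
          y t = S t x + (∫ s in (0 : ℝ)..t, K (t - s) (F (y s))) + g t) ∧
      ∀ z : ℝ → H,
        (ContinuousOn z (Set.Icc 0 T) ∧
          ∀ t ∈ Set.Icc (0 : ℝ) T,
            z t = S t x + (∫ s in (0 : ℝ)..t, K (t - s) (F (z s))) + g t) →
        ∀ t ∈ Set.Icc (0 : ℝ) T, z t = y t := by
  obtain ⟨L, hL⟩ := hF
  obtain ⟨y, ⟨hy1, hy2⟩, hy3⟩ := abstract_volt K (K_cont K hK) (K_bound K hK) F L hL T hT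
    (fun t => S t x + g t) ((S_cont S hS x T).add hg)
  refine ⟨y, ⟨hy1, fun t ht => ?_⟩, fun z hz => hy3 z ⟨hz.1, fun t ht => ?_⟩⟩
  · rw [add_right_comm]; exact hy2 t ht
  · rw [add_right_comm]; exact hz.2 t ht
end
end

section
/- Let F : H → H be Lipschitz continuous, T > 0, x ∈ H, and g : [0,T] → H continuous. For n ∈ ℕ let P_n : H → H be the coordinate projection onto the coordinates |k| ≤ n and set K_n(t) = K(t) ∘ P_n. Let y : [0,T] → H and y_n : [0,T] → H (n ∈ ℕ) be continuous functions satisfying y(t) = S(t)x + ∫₀ᵗ K(t−s)F(y(s))ds + g(t) and y_n(t) = S(t)x + ∫₀ᵗ K_n(t−s)F(y_n(s))ds + g(t) for all t ∈ [0,T]. Then sup_{t∈[0,T]} ‖y_n(t) − y(t)‖ → 0 as n → ∞. -/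
open Real MeasureTheory Filter

noncomputable section

lemma aux_norm_bound (A B : H) (c : ℝ) (hc : 0 ≤ c) (h : ∀ k : ℤ, |A k| ≤ c * |B (-k)|) :
    ‖A‖ ≤ c * ‖B‖ := by
  have h2 : (0 : ℝ) < (2 : ENNReal).toReal := by norm_num
  refine lp.norm_le_of_forall_sum_le h2 (by positivity) ?_
  intro s
  have hB := lp.sum_rpow_le_norm_rpow h2 B (s.map (Equiv.neg ℤ).toEmbedding)
  simp only [Finset.sum_map, ENNReal.toReal_ofNat, Real.rpow_ofNat, Equiv.coe_toEmbedding,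
    Equiv.neg_apply, Real.norm_eq_abs] at hB ⊢
  calc ∑ i ∈ s, |A i| ^ 2 ≤ ∑ i ∈ s, c ^ 2 * |B (-i)| ^ 2 := by
        refine Finset.sum_le_sum fun i _ => ?_
        rw [← mul_pow]
        exact pow_le_pow_left₀ (abs_nonneg _) (h i) 2
    _ = c ^ 2 * ∑ i ∈ s, |B (-i)| ^ 2 := by rw [Finset.mul_sum]
    _ ≤ c ^ 2 * ‖B‖ ^ 2 := by gcongr
    _ = _ := by rw [mul_pow]

lemma aux_exp (x a : ℝ) (hx : 0 ≤ x) (ha : 0 ≤ a) (ha1 : a ≤ 1) :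
    x ^ a * Real.exp (-x) ≤ 1 := by
  have h1 : x ^ a ≤ 1 + x := by
    rcases le_total x 1 with h | h
    · have := Real.rpow_le_one hx h ha
      linarith
    · have := Real.rpow_le_rpow_of_exponent_le h ha1
      rw [Real.rpow_one] at this
      linarith
  have h2 : x ^ a ≤ Real.exp x := by
    have := Real.add_one_le_exp x
    linarith
  rw [Real.exp_neg, ← div_eq_mul_inv, div_le_one (Real.exp_pos _)]
  exact h2

lemma aux_exp_le (κ t : ℝ) (ht : 0 < t) :
    Real.exp (-(1 + κ ^ 2) * t) ≤ Real.exp (-(κ ^ 2 * t)) := by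
  apply Real.exp_le_exp.mpr
  nlinarith

lemma aux_k1 (κ t : ℝ) (hκ : 0 ≤ κ) (ht : 0 < t) :
    κ * Real.exp (-(1 + κ ^ 2) * t) ≤ t ^ (-(1/2) : ℝ) := by
  have h1 := aux_exp (κ ^ 2 * t) (1/2) (by positivity) (by norm_num) (by norm_num)
  have h2 : (κ ^ 2 * t) ^ (1/2 : ℝ) = κ * t ^ (1/2 : ℝ) := by
    rw [Real.mul_rpow (by positivity) ht.le, ← Real.rpow_natCast, ← Real.rpow_mul hκ]
    norm_num
  rw [h2] at h1
  have h3 := aux_exp_le κ t ht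
  have h4 : 0 < t ^ (1/2 : ℝ) := Real.rpow_pos_of_pos ht _
  rw [Real.rpow_neg ht.le, ← one_div, le_div_iff₀ h4]
  have : κ * Real.exp (-(1 + κ ^ 2) * t) ≤ κ * Real.exp (-(κ ^ 2 * t)) := by gcongr
  nlinarith

lemma aux_k2 (κ t N : ℝ) (hN : 0 < N) (hκ : N ≤ κ) (ht : 0 < t) :
    κ * Real.exp (-(1 + κ ^ 2) * t) ≤ N ^ (-(1/2) : ℝ) * t ^ (-(3/4) : ℝ) := by
  have hκ0 : 0 < κ := lt_of_lt_of_le hN hκ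
  have h1 := aux_exp (κ ^ 2 * t) (3/4) (by positivity) (by norm_num) (by norm_num)
  have h2 : (κ ^ 2 * t) ^ (3/4 : ℝ) = κ * κ ^ (1/2 : ℝ) * t ^ (3/4 : ℝ) := by
    rw [Real.mul_rpow (by positivity) ht.le, ← Real.rpow_natCast, ← Real.rpow_mul hκ0.le]
    nth_rewrite 2 [← Real.rpow_one κ]
    rw [← Real.rpow_add hκ0]
    norm_num
  rw [h2] at h1
  have h3 := aux_exp_le κ t ht
  have h4 : 0 < t ^ (3/4 : ℝ) := Real.rpow_pos_of_pos ht _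
  have h5 : 0 < N ^ (1/2 : ℝ) := Real.rpow_pos_of_pos hN _
  have h6 : N ^ (1/2 : ℝ) ≤ κ ^ (1/2 : ℝ) := Real.rpow_le_rpow hN.le hκ (by norm_num)
  rw [Real.rpow_neg ht.le, Real.rpow_neg hN.le, ← mul_inv, ← one_div, le_div_iff₀ (by positivity)]
  calc κ * Real.exp (-(1 + κ ^ 2) * t) * (N ^ (1/2 : ℝ) * t ^ (3/4 : ℝ))
      ≤ κ * Real.exp (-(κ ^ 2 * t)) * (κ ^ (1/2 : ℝ) * t ^ (3/4 : ℝ)) := by gcongr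
    _ = κ * κ ^ (1/2 : ℝ) * t ^ (3/4 : ℝ) * Real.exp (-(κ ^ 2 * t)) := by ring
    _ ≤ 1 := h1

lemma aux_weight (lam r : ℝ) (hl : 0 < lam) (hr : 0 < r) :
    r ^ (-(1/2) : ℝ) * Real.exp (-(lam * r)) ≤ lam ^ (-(1/4) : ℝ) * r ^ (-(3/4) : ℝ) := by
  have h1 := aux_exp (lam * r) (1/4) (by positivity) (by norm_num) (by norm_num)
  rw [Real.mul_rpow hl.le hr.le] at h1
  have h4 : 0 < lam ^ (1/4 : ℝ) := Real.rpow_pos_of_pos hl _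
  have h5 : 0 < r ^ (-(3/4) : ℝ) := Real.rpow_pos_of_pos hr _
  have h6 : r ^ (-(1/2) : ℝ) = r ^ (-(3/4) : ℝ) * r ^ (1/4 : ℝ) := by
    rw [← Real.rpow_add hr]; norm_num
  rw [h6, Real.rpow_neg hl.le, ← one_div, div_mul_eq_mul_div, one_mul, le_div_iff₀ h4]
  nlinarith

lemma aux_K_norm (K : ℝ → H →L[ℝ] H)
    (hK : ∀ t : ℝ, 0 < t → ∀ (x : H) (k : ℤ),
      (K t x) k = -(k : ℝ) * Real.exp (-(1 + (k : ℝ) ^ 2) * t) * x (-k))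
    (t : ℝ) (ht : 0 < t) (z : H) : ‖K t z‖ ≤ t ^ (-(1/2) : ℝ) * ‖z‖ := by
  refine aux_norm_bound _ _ _ (by positivity) fun k => ?_
  rw [hK t ht, abs_mul, abs_mul, abs_neg, abs_of_pos (Real.exp_pos _)]
  have := aux_k1 |(k : ℝ)| t (abs_nonneg _) ht
  rw [sq_abs] at this
  gcongr

lemma aux_P_norm (P : ℕ → H →L[ℝ] H)
    (hP : ∀ (n : ℕ) (x : H) (k : ℤ), (P n x) k = if |k| ≤ (n : ℤ) then x k else 0)
    (K : ℝ → H →L[ℝ] H)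
    (hK : ∀ t : ℝ, 0 < t → ∀ (x : H) (k : ℤ),
      (K t x) k = -(k : ℝ) * Real.exp (-(1 + (k : ℝ) ^ 2) * t) * x (-k))
    (n : ℕ) (t : ℝ) (ht : 0 < t) (z : H) : ‖K t (P n z)‖ ≤ t ^ (-(1/2) : ℝ) * ‖z‖ := by
  refine aux_norm_bound _ _ _ (by positivity) fun k => ?_
  rw [hK t ht, abs_mul, abs_mul, abs_neg, abs_of_pos (Real.exp_pos _), hP]
  have := aux_k1 |(k : ℝ)| t (abs_nonneg _) ht
  rw [sq_abs] at this
  have h2 : |if |(-k)| ≤ (n : ℤ) then z (-k) else 0| ≤ |z (-k)| := by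
    split_ifs <;> simp
  gcongr

lemma aux_Q_norm (P : ℕ → H →L[ℝ] H)
    (hP : ∀ (n : ℕ) (x : H) (k : ℤ), (P n x) k = if |k| ≤ (n : ℤ) then x k else 0)
    (K : ℝ → H →L[ℝ] H)
    (hK : ∀ t : ℝ, 0 < t → ∀ (x : H) (k : ℤ),
      (K t x) k = -(k : ℝ) * Real.exp (-(1 + (k : ℝ) ^ 2) * t) * x (-k))
    (n : ℕ) (t : ℝ) (ht : 0 < t) (z : H) :
    ‖K t (P n z - z)‖ ≤ ((n : ℝ) + 1) ^ (-(1/2) : ℝ) * t ^ (-(3/4) : ℝ) * ‖z‖ := by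
  refine aux_norm_bound _ _ _ (by positivity) fun k => ?_
  rw [hK t ht, abs_mul, abs_mul, abs_neg, abs_of_pos (Real.exp_pos _), lp.coeFn_sub,
    Pi.sub_apply, hP]
  split_ifs with h
  · simp only [sub_self, abs_zero, mul_zero]; positivity
  · rw [zero_sub, abs_neg]
    have h3 : (n : ℝ) + 1 ≤ |(k : ℝ)| := by
      rw [abs_neg] at h
      have : (n : ℤ) + 1 ≤ |k| := by omega
      exact_mod_cast this
    have := aux_k2 |(k : ℝ)| t ((n : ℝ) + 1) (by positivity) h3 ht
    rw [sq_abs] at this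
    gcongr

lemma aux_int (t r : ℝ) (hr : -1 < r) :
    IntervalIntegrable (fun s : ℝ => (t - s) ^ r) volume 0 t := by
  have := (intervalIntegral.intervalIntegrable_rpow' (a := t) (b := 0) hr).comp_sub_left t
  simpa using this

lemma aux_K_int (K : ℝ → H →L[ℝ] H)
    (hK : ∀ t : ℝ, 0 < t → ∀ (x : H) (k : ℤ),
      (K t x) k = -(k : ℝ) * Real.exp (-(1 + (k : ℝ) ^ 2) * t) * x (-k))
    (T : ℝ) (z : ℝ → H) (hz : ContinuousOn z (Set.Icc 0 T)) (t : ℝ) (ht : t ∈ Set.Icc 0 T) :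
    IntervalIntegrable (fun s => K (t - s) (z s)) volume 0 t := by
  obtain ⟨M, hM⟩ := isCompact_Icc.exists_bound_of_continuousOn hz
  rw [intervalIntegrable_iff_integrableOn_Ioo_of_le ht.1]
  have hi := (aux_int t (-(1/2)) (by norm_num)).mul_const M
  rw [intervalIntegrable_iff_integrableOn_Ioo_of_le ht.1] at hi
  have hsub : Set.Ioo 0 t ⊆ Set.Icc 0 T := fun s hs => ⟨hs.1.le, hs.2.le.trans ht.2⟩
  refine Integrable.mono' hi ?_ ?_
  · refine aestronglyMeasurable_of_tendsto_ae (atTop : Filter (Finset ℤ))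
      (f := fun A s => ∑ k ∈ A, lp.singleContinuousLinearMap ℝ (fun _ : ℤ => ℝ) 2 k
        (-(k : ℝ) * Real.exp (-(1 + (k : ℝ) ^ 2) * (t - s)) *
          lp.evalCLM ℝ (fun _ : ℤ => ℝ) 2 (-k) (z s))) ?_ ?_
    · intro A
      refine ContinuousOn.aestronglyMeasurable ?_ measurableSet_Ioo
      have := hz.mono hsub
      fun_prop
    · rw [ae_restrict_iff' measurableSet_Ioo]
      refine Eventually.of_forall fun s hs => ?_
      have h := lp.hasSum_single (p := 2) (by norm_num) (K (t - s) (z s))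
      refine Tendsto.congr (fun A => ?_) h
      refine Finset.sum_congr rfl fun k _ => ?_
      exact congrArg (fun c : ℝ => lp.singleContinuousLinearMap ℝ (fun _ : ℤ => ℝ) 2 k c)
        (hK (t - s) (sub_pos.mpr hs.2) (z s) k)
  · rw [ae_restrict_iff' measurableSet_Ioo]
    refine Eventually.of_forall fun s hs => ?_
    have hp := sub_pos.mpr hs.2
    refine (aux_K_norm K hK _ hp _).trans ?_
    have := hM s (hsub hs)
    gcongr

lemma aux_int_val (t T : ℝ) (ht : t ∈ Set.Icc 0 T) :
    ∫ s in (0 : ℝ)..t, (t - s) ^ (-(3/4) : ℝ) ≤ 4 * T ^ (1/4 : ℝ) := by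
  rw [intervalIntegral.integral_comp_sub_left (fun x : ℝ => x ^ (-(3/4) : ℝ)) t,
    integral_rpow (Or.inl (by norm_num))]
  have h := Real.rpow_le_rpow ht.1 ht.2 (show (0 : ℝ) ≤ 1/4 by norm_num)
  norm_num at h ⊢
  linarith

/-- Pathwise approximation theorem: with `S`, `K`, the projections `P_n`, a Lipschitz
`F : H → H`, a continuous `g` and the mild solutions `y`, `y_n` of the equation and of its
Galerkin-type approximations `K_n(t) = K(t) ∘ P_n`, one has
`sup_{t∈[0,T]} ‖y_n(t) − y(t)‖ → 0` as `n → ∞`. -/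
theorem stmt_11 (S K : ℝ → H →L[ℝ] H)
    (hS : ∀ t : ℝ, 0 ≤ t → ∀ (x : H) (k : ℤ),
      (S t x) k = Real.exp (-(1 + (k : ℝ) ^ 2) * t) * x k)
    (hK : ∀ t : ℝ, 0 < t → ∀ (x : H) (k : ℤ),
      (K t x) k = -(k : ℝ) * Real.exp (-(1 + (k : ℝ) ^ 2) * t) * x (-k))
    (P : ℕ → H →L[ℝ] H)
    (hP : ∀ (n : ℕ) (x : H) (k : ℤ), (P n x) k = if |k| ≤ (n : ℤ) then x k else 0)
    (F : H → H) (hF : ∃ L : NNReal, LipschitzWith L F)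
    (T : ℝ) (hT : 0 < T) (x : H)
    (g : ℝ → H) (hg : ContinuousOn g (Set.Icc 0 T))
    (y : ℝ → H) (yn : ℕ → ℝ → H)
    (hy_cont : ContinuousOn y (Set.Icc 0 T))
    (hyn_cont : ∀ n : ℕ, ContinuousOn (yn n) (Set.Icc 0 T))
    (hy_sol : ∀ t ∈ Set.Icc (0 : ℝ) T,
      y t = S t x + (∫ s in (0 : ℝ)..t, K (t - s) (F (y s))) + g t)
    (hyn_sol : ∀ (n : ℕ), ∀ t ∈ Set.Icc (0 : ℝ) T,
      yn n t = S t x + (∫ s in (0 : ℝ)..t, ((K (t - s)).comp (P n)) (F (yn n s))) + g t) :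
    TendstoUniformlyOn (fun n t => yn n t) y atTop (Set.Icc 0 T) := by
  obtain ⟨L, hL⟩ := hF
  have hFy : ContinuousOn (fun s => F (y s)) (Set.Icc 0 T) :=
    hL.continuous.comp_continuousOn hy_cont
  obtain ⟨M, hM⟩ := isCompact_Icc.exists_bound_of_continuousOn hFy
  have hM0 : 0 ≤ M := (norm_nonneg _).trans (hM 0 ⟨le_rfl, hT.le⟩)
  set C : ℝ := 4 * T ^ (1/4 : ℝ) with hC
  have hC0 : 0 < C := by positivity
  set q : ℝ := 2 * C * L + 1 with hq
  have hq0 : 0 < q := by positivity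
  set lam : ℝ := q ^ (4 : ℝ) with hlam
  have hlam0 : 0 < lam := by positivity
  have hlq : lam ^ (-(1/4) : ℝ) = 1 / q := by
    rw [hlam, ← Real.rpow_mul hq0.le]
    norm_num
    rw [Real.rpow_neg_one]
  have key : ∀ n : ℕ, ∀ t ∈ Set.Icc (0 : ℝ) T,
      ‖yn n t - y t‖ ≤ Real.exp (lam * T) * (2 * C * M) * ((n : ℝ) + 1) ^ (-(1/2) : ℝ) := by
    intro n
    set e : ℝ := ((n : ℝ) + 1) ^ (-(1/2) : ℝ) with he
    have he0 : 0 < e := by positivity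
    have hcont : ContinuousOn (fun t => Real.exp (-(lam * t)) * ‖yn n t - y t‖)
        (Set.Icc 0 T) := by
      have := hyn_cont n
      fun_prop
    obtain ⟨t0, ht0, hmax⟩ := isCompact_Icc.exists_isMaxOn ⟨0, le_rfl, hT.le⟩ hcont
    set m : ℝ := Real.exp (-(lam * t0)) * ‖yn n t0 - y t0‖ with hm
    have hm0 : 0 ≤ m := by positivity
    have hu : ∀ s ∈ Set.Icc (0 : ℝ) T, ‖yn n s - y s‖ ≤ m * Real.exp (lam * s) := by
      intro s hs
      have h : Real.exp (-(lam * s)) * ‖yn n s - y s‖ ≤ m := hmax hs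
      rw [Real.exp_neg, inv_mul_le_iff₀ (Real.exp_pos _)] at h
      linarith
    have hFn : ContinuousOn (fun s => P n (F (yn n s))) (Set.Icc 0 T) :=
      (P n).continuous.comp_continuousOn (hL.continuous.comp_continuousOn (hyn_cont n))
    have hi1 := aux_K_int K hK T _ hFn t0 ht0
    have hi2 := aux_K_int K hK T _ hFy t0 ht0
    have hdiff : yn n t0 - y t0 = ∫ s in (0 : ℝ)..t0,
        (K (t0 - s) (P n (F (yn n s))) - K (t0 - s) (F (y s))) := by
      rw [intervalIntegral.integral_sub hi1 hi2, hyn_sol n t0 ht0, hy_sol t0 ht0]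
      simp only [ContinuousLinearMap.comp_apply]
      abel
    set B : ℝ := L * m * Real.exp (lam * t0) * (1 / q) + e * M with hB
    have hB0 : 0 ≤ B := by positivity
    have hbd : ‖yn n t0 - y t0‖ ≤ ∫ s in (0 : ℝ)..t0, (t0 - s) ^ (-(3/4) : ℝ) * B := by
      rw [hdiff]
      refine intervalIntegral.norm_integral_le_of_norm_le ht0.1 ?_
        ((aux_int t0 _ (by norm_num)).mul_const B)
      filter_upwards [Measure.ae_ne volume t0] with s hne hs
      have hst : 0 < t0 - s := sub_pos.mpr (lt_of_le_of_ne hs.2 hne)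
      have hsT : s ∈ Set.Icc 0 T := ⟨hs.1.le, hs.2.trans ht0.2⟩
      have hdec : K (t0 - s) (P n (F (yn n s))) - K (t0 - s) (F (y s)) =
          K (t0 - s) (P n (F (yn n s) - F (y s))) + K (t0 - s) (P n (F (y s)) - F (y s)) := by
        simp only [map_sub]; abel
      rw [hdec]
      refine (norm_add_le _ _).trans ?_
      have h1 := aux_P_norm P hP K hK n _ hst (F (yn n s) - F (y s))
      have h2 := aux_Q_norm P hP K hK n _ hst (F (y s))
      have h3 : ‖F (yn n s) - F (y s)‖ ≤ L * (m * Real.exp (lam * s)) := by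
        refine (hL.norm_sub_le _ _).trans ?_
        have := hu s hsT
        gcongr
      have h4 := hM s hsT
      have h5 := aux_weight lam _ hlam0 hst
      rw [hlq] at h5
      have h6 : Real.exp (lam * s) = Real.exp (lam * t0) * Real.exp (-(lam * (t0 - s))) := by
        rw [← Real.exp_add]; ring_nf
      have h7 : ‖K (t0 - s) (P n (F (yn n s) - F (y s)))‖ ≤
          (t0 - s) ^ (-(3/4) : ℝ) * (L * m * Real.exp (lam * t0) * (1 / q)) := by
        calc _ ≤ (t0 - s) ^ (-(1/2) : ℝ) * (L * (m * Real.exp (lam * s))) := by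
              refine h1.trans ?_; gcongr
          _ = (L * m * Real.exp (lam * t0)) *
              ((t0 - s) ^ (-(1/2) : ℝ) * Real.exp (-(lam * (t0 - s)))) := by rw [h6]; ring
          _ ≤ (L * m * Real.exp (lam * t0)) * (1 / q * (t0 - s) ^ (-(3/4) : ℝ)) := by gcongr
          _ = _ := by ring
      have h8 : ‖K (t0 - s) (P n (F (y s)) - F (y s))‖ ≤ (t0 - s) ^ (-(3/4) : ℝ) * (e * M) := by
        calc _ ≤ e * (t0 - s) ^ (-(3/4) : ℝ) * M := by refine h2.trans ?_; gcongr
          _ = _ := by ring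
      rw [hB, mul_add]
      exact add_le_add h7 h8
    rw [intervalIntegral.integral_mul_const] at hbd
    have hbd2 : ‖yn n t0 - y t0‖ ≤ C * B :=
      hbd.trans (mul_le_mul_of_nonneg_right (aux_int_val t0 T ht0) hB0)
    have hm2 : m ≤ C * L * (1 / q) * m + C * M * e := by
      have h1 : Real.exp (-(lam * t0)) * Real.exp (lam * t0) = 1 := by
        rw [← Real.exp_add]; simp
      have h2 : Real.exp (-(lam * t0)) ≤ 1 :=
        Real.exp_le_one_iff.mpr (by have := mul_nonneg hlam0.le ht0.1; linarith)
      calc m ≤ Real.exp (-(lam * t0)) * (C * B) := by rw [hm]; gcongr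
        _ = C * L * (1 / q) * m * (Real.exp (-(lam * t0)) * Real.exp (lam * t0))
            + Real.exp (-(lam * t0)) * (C * M * e) := by rw [hB]; ring
        _ ≤ C * L * (1 / q) * m * 1 + 1 * (C * M * e) := by rw [h1]; gcongr
        _ = _ := by ring
    have hhalf : C * L * (1 / q) ≤ 1 / 2 := by
      rw [mul_one_div, div_le_div_iff₀ hq0 (by norm_num), hq]; linarith
    have hm3 : m ≤ 2 * C * M * e := by
      have := mul_le_mul_of_nonneg_right hhalf hm0
      linarith
    intro t ht
    calc ‖yn n t - y t‖ ≤ m * Real.exp (lam * t) := hu t ht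
      _ ≤ (2 * C * M * e) * Real.exp (lam * T) := by
        have := ht.2
        gcongr
      _ = _ := by ring
  have hlim : Tendsto (fun n : ℕ => Real.exp (lam * T) * (2 * C * M) *
      ((n : ℝ) + 1) ^ (-(1/2) : ℝ)) atTop (nhds 0) := by
    have h1 : Tendsto (fun n : ℕ => ((n : ℝ) + 1)) atTop atTop :=
      tendsto_atTop_add_const_right _ _ tendsto_natCast_atTop_atTop
    have h2 := (tendsto_rpow_neg_atTop (show (0 : ℝ) < 1/2 by norm_num)).comp h1
    have h3 := h2.const_mul (Real.exp (lam * T) * (2 * C * M))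
    rw [mul_zero] at h3
    exact h3
  rw [Metric.tendstoUniformlyOn_iff]
  intro ε hε
  filter_upwards [hlim.eventually (gt_mem_nhds hε)] with n hn t ht
  rw [dist_comm, dist_eq_norm]
  exact (key n t ht).trans_lt hn
end
end

section
/- Let T > 0. For every continuous function ψ : [0,T] → H with ψ(0) = 0 and every ε > 0 there exists a strongly measurable function u : [0,T] → H with ∫₀ᵀ ‖u(t)‖² dt < ∞ such that sup_{t∈[0,T]} ‖ ∫₀ᵗ S(t−s) u(s) ds − ψ(t) ‖ ≤ ε. In other words, the linear map u ↦ σ_u, σ_u(t) = ∫₀ᵗ S(t−s)u(s)ds, from L²([0,T];H) to C₀([0,T];H) = {φ ∈ C([0,T];H) : φ(0) = 0} has dense range. -/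
open Real MeasureTheory

noncomputable section

/-- `φ` is exactly reachable on `[0,T]` by a continuous control. -/
def Reach (S : ℝ → H →L[ℝ] H) (T : ℝ) (φ : ℝ → H) : Prop :=
  ∃ u : ℝ → H, Continuous u ∧ ∀ t ∈ Set.Icc (0 : ℝ) T,
    IntervalIntegrable (fun s => S (t - s) (u s)) volume 0 t ∧
    (∫ s in (0 : ℝ)..t, S (t - s) (u s)) = φ t

lemma Reach.zero (S : ℝ → H →L[ℝ] H) (T : ℝ) : Reach S T (fun _ => 0) :=
  ⟨fun _ => 0, continuous_const, fun t _ => by simp⟩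

lemma Reach.add {S : ℝ → H →L[ℝ] H} {T : ℝ} {φ₁ φ₂ : ℝ → H}
    (h₁ : Reach S T φ₁) (h₂ : Reach S T φ₂) : Reach S T (fun t => φ₁ t + φ₂ t) := by
  obtain ⟨u, hu, h⟩ := h₁
  obtain ⟨v, hv, h'⟩ := h₂
  refine ⟨fun s => u s + v s, hu.add hv, fun t ht => ?_⟩
  obtain ⟨a, b⟩ := h t ht
  obtain ⟨c, d⟩ := h' t ht
  simp only [map_add]
  exact ⟨a.add c, by rw [intervalIntegral.integral_add a c, b, d]⟩

lemma Reach.sum {S : ℝ → H →L[ℝ] H} {T : ℝ} {ι : Type*} (s : Finset ι) (φ : ι → ℝ → H)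
    (h : ∀ i ∈ s, Reach S T (φ i)) : Reach S T (fun t => ∑ i ∈ s, φ i t) := by
  classical
  induction s using Finset.induction_on with
  | empty => simpa using Reach.zero S T
  | insert a s ha ih =>
    simp only [Finset.sum_insert ha]
    exact (h a (Finset.mem_insert_self a s)).add
      (ih fun i hi => h i (Finset.mem_insert_of_mem hi))

lemma Reach.single (S : ℝ → H →L[ℝ] H)
    (hS : ∀ t : ℝ, 0 ≤ t → ∀ (x : H) (k : ℤ),
      (S t x) k = Real.exp (-(1 + (k : ℝ) ^ 2) * t) * x k)
    (T : ℝ) (q : Polynomial ℝ) (hq : q.eval 0 = 0) (k : ℤ) (a : ℝ) :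
    Reach S T (fun t => q.eval t • (lp.single 2 k a : H)) := by
  set l : ℝ := 1 + (k : ℝ) ^ 2 with hl
  refine ⟨fun s => (q.derivative.eval s + l * q.eval s) • (lp.single 2 k a : H), ?_, ?_⟩
  · fun_prop
  intro t ht
  have key : ∀ s ∈ Set.uIcc 0 t,
      (Real.exp (-l * (t - s)) * (q.derivative.eval s + l * q.eval s)) • (lp.single 2 k a : H)
      = S (t - s) ((q.derivative.eval s + l * q.eval s) • (lp.single 2 k a : H)) := by
    intro s hs
    rw [Set.uIcc_of_le ht.1] at hs
    ext j
    rw [hS _ (by linarith [hs.2])]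
    by_cases hj : j = k
    · subst hj
      simp [hl]
      ring
    · simp [Pi.single_eq_of_ne hj]
  have cont : Continuous fun s : ℝ =>
      Real.exp (-l * (t - s)) * (q.derivative.eval s + l * q.eval s) := by fun_prop
  constructor
  · refine IntervalIntegrable.congr (fun s hs => key s (Set.uIoc_subset_uIcc hs)) (Continuous.intervalIntegrable
      (cont.smul (continuous_const (y := (lp.single 2 k a : H)))) 0 t)

  · rw [← intervalIntegral.integral_congr key, intervalIntegral.integral_smul_const]
    congr 1
    have hd : ∀ s ∈ Set.uIcc 0 t, HasDerivAt (fun s => Real.exp (-l * (t - s)) * q.eval s)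
        (Real.exp (-l * (t - s)) * (q.derivative.eval s + l * q.eval s)) s := by
      intro s _
      have h1 : HasDerivAt (fun s => -l * (t - s)) l s := by
        simpa using ((hasDerivAt_id s).const_sub t).const_mul (-l)
      refine (h1.exp.mul (q.hasDerivAt s)).congr_deriv ?_
      ring
    rw [intervalIntegral.integral_eq_sub_of_hasDerivAt hd (cont.intervalIntegrable 0 t)]
    simp [hq]

/-- Dense range of the map `u ↦ σ_u`, `σ_u(t) = ∫₀ᵗ S(t−s)u(s)ds`, from `L²([0,T];H)` into
`C₀([0,T];H)`: for every continuous `ψ : [0,T] → H` with `ψ(0) = 0` and every `ε > 0` there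
is a strongly measurable and square-integrable `u : [0,T] → H` with
`sup_{t∈[0,T]} ‖∫₀ᵗ S(t−s)u(s)ds − ψ(t)‖ ≤ ε`. -/
theorem stmt_12 (S : ℝ → H →L[ℝ] H)
    (hS : ∀ t : ℝ, 0 ≤ t → ∀ (x : H) (k : ℤ),
      (S t x) k = Real.exp (-(1 + (k : ℝ) ^ 2) * t) * x k)
    (T : ℝ) (hT : 0 < T)
    (ψ : ℝ → H) (hψ : ContinuousOn ψ (Set.Icc 0 T)) (hψ0 : ψ 0 = 0)
    (ε : ℝ) (hε : 0 < ε) :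
    ∃ u : ℝ → H,
      MeasureTheory.StronglyMeasurable u ∧
      IntervalIntegrable (fun t => ‖u t‖ ^ 2) MeasureTheory.volume 0 T ∧
      ∀ t ∈ Set.Icc (0 : ℝ) T,
        ‖(∫ s in (0 : ℝ)..t, S (t - s) (u s)) - ψ t‖ ≤ ε := by
  classical
  -- rescale to the unit interval
  let f : C(unitInterval, H) := ⟨fun x => ψ (T * x), by
    refine hψ.comp_continuous (by fun_prop) fun x => ?_
    exact ⟨mul_nonneg hT.le x.2.1, mul_le_of_le_one_right hT.le x.2.2⟩⟩
  have hf0 : f 0 = 0 := by simp [f, hψ0]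
  have hev := Metric.tendsto_atTop.1 (bernsteinApproximation_uniform f) (ε / 2) (half_pos hε)
  obtain ⟨n, hn⟩ := hev
  replace hn := hn n le_rfl
  have hfin : ∀ x : H, ∃ s : Finset ℤ, ‖(∑ i ∈ s, (lp.single 2 i (x i) : H)) - x‖ < ε / 2 := by
    intro x
    have h := lp.hasSum_single (p := 2) (by simp) x
    obtain ⟨s, hs⟩ := (Metric.tendsto_atTop.1 h) (ε / 2) (half_pos hε)
    exact ⟨s, by simpa [dist_eq_norm] using hs s le_rfl⟩
  choose F hF using hfin
  let q : ℕ → Polynomial ℝ := fun k =>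
    (bernsteinPolynomial ℝ n k).comp (Polynomial.C T⁻¹ * Polynomial.X)
  let y : Fin (n + 1) → H := fun k => ∑ i ∈ F (f (bernstein.z k)),
    (lp.single 2 i ((f (bernstein.z k) : H) i) : H)
  have hy : ∀ k, ‖y k - f (bernstein.z k)‖ ≤ ε / 2 := fun k => (hF _).le
  have hy0 : y 0 = 0 := by simp [y, hf0]
  have hR : Reach S T (fun t => ∑ k : Fin (n + 1), (q k).eval t • y k) := by
    refine Reach.sum _ _ fun k _ => ?_
    by_cases hk : k = 0
    · subst hk
      simpa [hy0] using Reach.zero S T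
    · simp only [y, Finset.smul_sum]
      refine Reach.sum _ _ fun i _ => Reach.single S hS T _ ?_ _ _
      have : (k : ℕ) ≠ 0 := fun h => hk (Fin.ext h)
      simp [q, bernsteinPolynomial, this]
  obtain ⟨u, hu, h⟩ := hR
  refine ⟨u, hu.stronglyMeasurable, (hu.norm.pow 2).intervalIntegrable 0 T, fun t ht => ?_⟩
  rw [(h t ht).2]
  let x : unitInterval := ⟨t / T, div_nonneg ht.1 hT.le, (div_le_one hT).2 ht.2⟩
  have hfx : f x = ψ t := by
    change ψ (T * (t / T)) = ψ t
    rw [mul_div_cancel₀ _ hT.ne']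
  have hqx : ∀ k : Fin (n + 1), (q k).eval t = bernstein n k x := by
    intro k
    rw [bernstein_apply]
    simp [q, bernsteinPolynomial, x, div_eq_inv_mul]
  have h1 : ‖bernsteinApproximation n f x - f x‖ ≤ ε / 2 := by
    rw [← dist_eq_norm]
    exact (ContinuousMap.dist_apply_le_dist x).trans hn.le
  have h2 : ‖(∑ k : Fin (n + 1), (q k).eval t • y k) - bernsteinApproximation n f x‖ ≤ ε / 2 := by
    rw [bernsteinApproximation.apply, ← Finset.sum_sub_distrib]
    calc _ ≤ ∑ k : Fin (n + 1), bernstein n k x * (ε / 2) := by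
          refine norm_sum_le_of_le _ fun k _ => ?_
          rw [hqx, ← smul_sub, norm_smul, Real.norm_of_nonneg bernstein_nonneg]
          exact mul_le_mul_of_nonneg_left (hy k) bernstein_nonneg
      _ = ε / 2 := by rw [← Finset.sum_mul, bernstein.probability, one_mul]
  rw [← hfx]
  calc _ ≤ _ := norm_sub_le_norm_sub_add_norm_sub _ (bernsteinApproximation n f x) _
    _ ≤ ε / 2 + ε / 2 := add_le_add h2 h1
    _ = ε := add_halves ε
end
end

section
/- Let F : H → H be Lipschitz continuous. Then the control system y(t) = S(t)x + ∫₀ᵗ K(t−s)F(y(s))ds + ∫₀ᵗ S(t−s)u(s)ds is approximately controllable: for every ε > 0, T > 0 and x, z ∈ H there exist a strongly measurable u : [0,T] → H with ∫₀ᵀ ‖u(t)‖² dt < ∞ and a continuous y : [0,T] → H satisfying the above integral equation for all t ∈ [0,T], such that ‖y(T) − z‖ ≤ ε. -/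
open Real MeasureTheory

noncomputable section

section Abstract

variable {V : Type*} [NormedAddCommGroup V] [NormedSpace ℝ V]

lemma conv_intervalIntegrable (E : ℝ → V →L[ℝ] V) (κ : ℝ → ℝ)
    (hκ : ∀ a b : ℝ, IntervalIntegrable κ volume a b)
    (hE : ∀ r x, ‖E r x‖ ≤ κ r * ‖x‖) (hκ0 : ∀ r, 0 ≤ κ r)
    (hmeas : ∀ φ : ℝ → V, Continuous φ → AEStronglyMeasurable (fun r => E r (φ r)) volume)
    (φ : ℝ → V) (hφ : Continuous φ) (M : ℝ) (hM : ∀ s, ‖φ s‖ ≤ M) (t : ℝ) (a b : ℝ) :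
    IntervalIntegrable (fun r => E r (φ (t - r))) volume a b := by
  refine IntervalIntegrable.mono_fun' ((hκ a b).mul_const M) ?_ ?_
  · exact (hmeas (fun r => φ (t - r)) (by fun_prop)).mono_measure Measure.restrict_le_self
  · refine Filter.Eventually.of_forall fun r => ?_
    exact (hE r _).trans (mul_le_mul_of_nonneg_left (hM _) (hκ0 r))

lemma conv_continuous (E : ℝ → V →L[ℝ] V) (κ : ℝ → ℝ)
    (hκ : ∀ a b : ℝ, IntervalIntegrable κ volume a b)
    (hE : ∀ r x, ‖E r x‖ ≤ κ r * ‖x‖) (hκ0 : ∀ r, 0 ≤ κ r)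
    (hmeas : ∀ φ : ℝ → V, Continuous φ → AEStronglyMeasurable (fun r => E r (φ r)) volume)
    (φ : ℝ → V) (hφ : Continuous φ) (M : ℝ) (hM : ∀ s, ‖φ s‖ ≤ M) :
    Continuous (fun t => ∫ r in (0:ℝ)..t, E r (φ (t - r))) := by
  rw [continuous_iff_continuousAt]
  intro t0
  have h := intervalIntegral.continuousAt_parametric_primitive_of_dominated
    (μ := volume) (F := fun t r => E r (φ (t - r))) (fun r => κ r * M)
    (-(|t0| + 1)) (|t0| + 1) (a₀ := 0) (b₀ := t0) (x₀ := t0)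
    (fun t => (hmeas (fun r => φ (t - r)) (by fun_prop)).mono_measure Measure.restrict_le_self)
    (Filter.Eventually.of_forall fun t => Filter.Eventually.of_forall fun r =>
      (hE r _).trans (mul_le_mul_of_nonneg_left (hM _) (hκ0 r)))
    ((hκ _ _).mul_const M)
    (Filter.Eventually.of_forall fun r => by
      have : Continuous fun x => E r (φ (x - r)) := by fun_prop
      exact this.continuousAt)
    ⟨by linarith [abs_nonneg t0], by linarith [abs_nonneg t0]⟩
    ⟨by linarith [neg_abs_le t0], by linarith [le_abs_self t0]⟩ (by simp)
  exact ContinuousAt.comp (f := fun t : ℝ => (t, t)) h (by fun_prop)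

lemma conv_bound (E : ℝ → V →L[ℝ] V) (κ : ℝ → ℝ)
    (hκ : ∀ a b : ℝ, IntervalIntegrable κ volume a b)
    (hE : ∀ r x, ‖E r x‖ ≤ κ r * ‖x‖) (hκ0 : ∀ r, 0 ≤ κ r)
    (φ : ℝ → V) (M : ℝ) (hM : ∀ s, ‖φ s‖ ≤ M) (T t : ℝ) (ht : 0 ≤ t) (htT : t ≤ T) :
    ‖∫ r in (0:ℝ)..t, E r (φ (t - r))‖ ≤ (∫ r in (0:ℝ)..T, κ r) * M := by
  have hM0 : 0 ≤ M := (norm_nonneg _).trans (hM 0)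
  have h1 : ‖∫ r in (0:ℝ)..t, E r (φ (t - r))‖ ≤ ∫ r in (0:ℝ)..t, κ r * M := by
    refine intervalIntegral.norm_integral_le_of_norm_le ht ?_ ((hκ _ _).mul_const M)
    exact Filter.Eventually.of_forall fun r _ =>
      (hE r _).trans (mul_le_mul_of_nonneg_left (hM _) (hκ0 r))
  refine h1.trans ?_
  rw [intervalIntegral.integral_mul_const]
  refine mul_le_mul_of_nonneg_right ?_ hM0
  exact intervalIntegral.integral_mono_interval le_rfl ht htT
    (Filter.Eventually.of_forall hκ0) (hκ _ _)

lemma fixpt [CompleteSpace V] (E : ℝ → V →L[ℝ] V) (κ : ℝ → ℝ)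
    (hκ : ∀ a b : ℝ, IntervalIntegrable κ volume a b)
    (hE : ∀ r x, ‖E r x‖ ≤ κ r * ‖x‖) (hκ0 : ∀ r, 0 ≤ κ r)
    (hmeas : ∀ φ : ℝ → V, Continuous φ → AEStronglyMeasurable (fun r => E r (φ r)) volume)
    (F : V → V) (L : NNReal) (hF : LipschitzWith L F) (T : ℝ) (hT : 0 < T)
    (g : ℝ → V) (hg : ContinuousOn g (Set.Icc 0 T)) (M₀ : ℝ)
    (hM₀ : ∀ t ∈ Set.Icc (0:ℝ) T, ‖F (g t)‖ ≤ M₀)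
    (hI : (∫ r in (0:ℝ)..T, κ r) * L ≤ 1 / 2) :
    ∃ y : ℝ → V, Continuous y ∧ (∃ M, ∀ s, ‖F (y s)‖ ≤ M) ∧
      (∀ t ∈ Set.Icc (0:ℝ) T,
        IntervalIntegrable (fun s => E (t - s) (F (y s))) volume 0 t ∧
        y t = g t + ∫ s in (0:ℝ)..t, E (t - s) (F (y s))) ∧
      ‖y T - g T‖ ≤ 2 * ((∫ r in (0:ℝ)..T, κ r) * M₀) := by
  set I := ∫ r in (0:ℝ)..T, κ r with hIdef
  have hI0 : 0 ≤ I := intervalIntegral.integral_nonneg hT.le fun r _ => hκ0 r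
  let X := C(Set.Icc (0:ℝ) T, V)
  let ext : X → ℝ → V := fun y => Set.IccExtend hT.le y
  have hext : ∀ y : X, Continuous (ext y) := fun y => y.continuous.Icc_extend'
  have hbd : ∀ y : X, ∃ M, ∀ s, ‖F (ext y s)‖ ≤ M := by
    intro y
    obtain ⟨M, hM⟩ := (isCompact_range (hF.continuous.comp y.continuous)).isBounded.exists_norm_le
    exact ⟨M, fun s => hM _ ⟨Set.projIcc 0 T hT.le s, rfl⟩⟩
  have hFc : ∀ y : X, Continuous fun s => F (ext y s) := fun y => hF.continuous.comp (hext y)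
  let J : X → ℝ → V := fun y t => ∫ r in (0:ℝ)..t, E r (F (ext y (t - r)))
  have hJ : ∀ y, Continuous (J y) := fun y => by
    obtain ⟨M, hM⟩ := hbd y
    exact conv_continuous E κ hκ hE hκ0 hmeas _ (hFc y) M hM
  have hJint : ∀ (y : X) (t a b : ℝ),
      IntervalIntegrable (fun r => E r (F (ext y (t - r)))) volume a b := fun y t a b => by
    obtain ⟨M, hM⟩ := hbd y
    exact conv_intervalIntegrable E κ hκ hE hκ0 hmeas _ (hFc y) M hM t a b
  let Φ : X → X := fun y =>
    ⟨fun t => g t + J y t, (hg.domRestrict).add ((hJ y).comp continuous_subtype_val)⟩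
  let g' : X := ⟨fun t => g t, hg.domRestrict⟩
  have hdist : ∀ (y₁ y₂ : X) (s : ℝ), ‖F (ext y₁ s) - F (ext y₂ s)‖ ≤ L * dist y₁ y₂ := by
    intro y₁ y₂ s
    rw [← dist_eq_norm]
    refine (hF.dist_le_mul _ _).trans ?_
    gcongr
    exact ContinuousMap.dist_apply_le_dist _
  have hΦ : ContractingWith (1/2 : NNReal) Φ := by
    refine ⟨by rw [← NNReal.coe_lt_coe]; norm_num, LipschitzWith.of_dist_le_mul fun y₁ y₂ => ?_⟩
    rw [ContinuousMap.dist_le (by positivity)]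
    intro t
    have e : dist (Φ y₁ t) (Φ y₂ t) = ‖∫ r in (0:ℝ)..(t:ℝ),
        E r ((fun s => F (ext y₁ s) - F (ext y₂ s)) (t - r))‖ := by
      change dist (g t + J y₁ t) (g t + J y₂ t) = _
      rw [dist_add_left, dist_eq_norm]
      simp only [J, map_sub]
      rw [intervalIntegral.integral_sub (hJint _ _ _ _) (hJint _ _ _ _)]
    rw [e]
    refine (conv_bound E κ hκ hE hκ0 _ _ (hdist y₁ y₂) T t t.2.1 t.2.2).trans ?_
    rw [← mul_assoc]
    refine mul_le_mul_of_nonneg_right ?_ dist_nonneg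
    simpa using hI
  let y := ContractingWith.fixedPoint Φ hΦ
  have hy : Φ y = y := hΦ.fixedPoint_isFixedPt
  have hyg : dist g' y ≤ dist g' (Φ g') / (1 - (1/2 : NNReal)) := hΦ.dist_fixedPoint_le g'
  have hgg : dist g' (Φ g') ≤ I * M₀ := by
    have hM0 : 0 ≤ M₀ := (norm_nonneg _).trans (hM₀ 0 ⟨le_rfl, hT.le⟩)
    rw [ContinuousMap.dist_le (by positivity)]
    intro t
    change dist (g t) (g t + J g' t) ≤ _
    rw [dist_self_add_right]
    exact conv_bound E κ hκ hE hκ0 (fun s => F (ext g' s)) M₀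
      (fun s => hM₀ _ (Set.projIcc 0 T hT.le s).2) T t t.2.1 t.2.2
  refine ⟨ext y, hext y, hbd y, fun t ht => ⟨?_, ?_⟩, ?_⟩
  · have := (hJint y t t 0).comp_sub_left t
    simpa using this
  · have h1 : ext y t = y ⟨t, ht⟩ := Set.IccExtend_of_mem _ _ ht
    have h2 : y ⟨t, ht⟩ = g t + J y t := by
      conv_lhs => rw [← hy]
      rfl
    rw [h1, h2]
    congr 1
    have := intervalIntegral.integral_comp_sub_left (a := 0) (b := t)
      (fun r => E r (F (ext y (t - r)))) t
    simp only [sub_sub_cancel, sub_self, sub_zero] at this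
    exact this.symm
  · have hTm : T ∈ Set.Icc (0:ℝ) T := ⟨hT.le, le_rfl⟩
    have h1 : ext y T = y ⟨T, hTm⟩ := Set.IccExtend_of_mem _ _ hTm
    rw [h1]
    have h3 : dist (g' ⟨T, hTm⟩) (y ⟨T, hTm⟩) ≤ dist g' y := ContinuousMap.dist_apply_le_dist _
    rw [dist_comm, dist_eq_norm] at h3
    refine h3.trans (hyg.trans ?_)
    have : ((1:ℝ) - ((1/2 : NNReal) : ℝ)) = 1/2 := by norm_num
    rw [this]
    linarith

end Abstract

lemma H_meas {α : Type*} [MeasurableSpace α] (f : α → H)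
    (hf : ∀ k : ℤ, Measurable fun a => f a k) : StronglyMeasurable f := by
  refine stronglyMeasurable_of_tendsto (u := Filter.atTop)
    (f := fun (s : Finset ℤ) a => ∑ k ∈ s, lp.single 2 k (f a k)) ?_ ?_
  · intro s
    refine Finset.stronglyMeasurable_fun_sum s fun k _ => ?_
    have h : Continuous (lp.single (E := fun _ : ℤ => ℝ) 2 k) := (lp.isometry_single k).continuous
    exact h.comp_stronglyMeasurable (hf k).stronglyMeasurable
  · rw [tendsto_pi_nhds]
    intro a
    exact lp.hasSum_single (by simp) (f a)

lemma H_norm_le (x y : H) (B : ℝ) (hB : 0 ≤ B) (σ : ℤ → ℤ) (hσ : Function.Injective σ)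
    (h : ∀ k, |y k| ≤ B * |x (σ k)|) : ‖y‖ ≤ B * ‖x‖ := by
  refine lp.norm_le_of_forall_sum_le (by simp) (by positivity) fun s => ?_
  have h2 := lp.sum_rpow_le_norm_rpow (p := 2) (by simp) x (s.image σ)
  rw [Finset.sum_image hσ.injOn] at h2
  simp only [ENNReal.toReal_ofNat, Real.rpow_ofNat, Real.norm_eq_abs] at h2 ⊢
  calc ∑ i ∈ s, |y i| ^ 2 ≤ ∑ i ∈ s, B ^ 2 * |x (σ i)| ^ 2 := by
        refine Finset.sum_le_sum fun i _ => ?_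
        rw [← mul_pow]
        exact pow_le_pow_left₀ (abs_nonneg _) (h i) 2
    _ = B ^ 2 * ∑ i ∈ s, |x (σ i)| ^ 2 := by rw [Finset.mul_sum]
    _ ≤ B ^ 2 * ‖x‖ ^ 2 := by gcongr
    _ = _ := by ring

lemma H_norm_sq (x : H) : ‖x‖ ^ 2 = ∑' k, |x k| ^ 2 := by
  have := lp.norm_rpow_eq_tsum (p := 2) (by simp) x
  simpa using this

lemma H_summable (x : H) : Summable fun k => |x k| ^ 2 := by
  have := (lp.memℓp x).summable (by simp)
  simpa using this

lemma H_cont {α : Type*} [TopologicalSpace α] (f : α → H) (c : H)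
    (hf : ∀ k : ℤ, Continuous fun a => f a k) (hc : ∀ a k, |f a k| ≤ |c k|) : Continuous f := by
  rw [continuous_iff_continuousAt]
  intro a0
  rw [ContinuousAt, tendsto_iff_norm_sub_tendsto_zero]
  have h : Filter.Tendsto (fun a => ‖f a - f a0‖ ^ 2) (nhds a0) (nhds 0) := by
    simp only [H_norm_sq]
    have e : (0:ℝ) = ∑' k : ℤ, (0:ℝ) := by simp
    rw [e]
    refine tendsto_tsum_of_dominated_convergence (bound := fun k => 4 * |c k| ^ 2)
      ((H_summable c).mul_left 4) ?_ ?_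
    · intro k
      have h1 : Continuous fun a => |(f a - f a0) k| ^ 2 := by
        have := hf k
        simp only [lp.coeFn_sub, Pi.sub_apply]
        fun_prop
      have := h1.tendsto a0
      simpa using this
    · refine Filter.Eventually.of_forall fun a k => ?_
      simp only [lp.coeFn_sub, Pi.sub_apply]
      rw [Real.norm_of_nonneg (by positivity)]
      have : |f a k - f a0 k| ≤ 2 * |c k| := by
        refine (abs_sub _ _).trans ?_
        linarith [hc a k, hc a0 k]
      calc _ ≤ (2 * |c k|) ^ 2 := by gcongr
        _ = _ := by ring
  have h2 := h.sqrt
  simpa using h2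

def coordSum (s : Finset ℤ) (c : ℤ → ℝ) (σ : ℤ → ℤ) : H →L[ℝ] H :=
  ∑ k ∈ s, (lp.singleContinuousLinearMap ℝ (fun _ : ℤ => ℝ) 2 k).comp
    (c k • lp.evalCLM ℝ (fun _ : ℤ => ℝ) 2 (σ k))

lemma lp_sum_single_apply (s : Finset ℤ) (a : ℤ → ℝ) (j : ℤ) :
    (∑ k ∈ s, lp.single (E := fun _ : ℤ => ℝ) 2 k (a k) : H) j = if j ∈ s then a j else 0 := by
  rw [lp.coeFn_sum, Finset.sum_apply]
  simp [lp.single_apply, Pi.single_apply]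

lemma coordSum_apply (s : Finset ℤ) (c : ℤ → ℝ) (σ : ℤ → ℤ) (x : H) (j : ℤ) :
    (coordSum s c σ x) j = if j ∈ s then c j * x (σ j) else 0 := by
  rw [← lp_sum_single_apply s (fun j => c j * x (σ j)) j]
  have : coordSum s c σ x = ∑ k ∈ s, lp.single (E := fun _ : ℤ => ℝ) 2 k (c k * x (σ k)) := by
    rw [coordSum, sum_apply]
    rfl
  rw [this]

lemma scalar_bound (c k r : ℝ) (hc : 0 < c) (hk : 0 < k) (h : 1 ≤ c ^ 2 * k) (hr : 0 < r) :
    k * Real.exp (-(1 + k ^ 2) * r) ≤ c * r ^ (-(3/4) : ℝ) := by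
  set a := k ^ 2 * r with ha
  have ha0 : 0 < a := by positivity
  have h1 : a ^ (3/4 : ℝ) ≤ Real.exp a := by
    have : a ^ (3/4 : ℝ) ≤ (Real.exp a) ^ (3/4 : ℝ) := by
      gcongr
      linarith [Real.add_one_le_exp a]
    refine this.trans ?_
    rw [← Real.exp_mul]
    exact Real.exp_le_exp.2 (by linarith)
  have h2 : a ^ (3/4 : ℝ) = k ^ (3/2 : ℝ) * r ^ (3/4 : ℝ) := by
    rw [ha, Real.mul_rpow (by positivity) hr.le, ← Real.rpow_natCast k 2, ← Real.rpow_mul hk.le]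
    norm_num
  have h3 : k ≤ c * k ^ (3/2 : ℝ) := by
    have e : k ^ (3/2 : ℝ) = k * k ^ (1/2 : ℝ) := by
      rw [← Real.rpow_one_add' hk.le (by norm_num)]; norm_num
    have : 1 ≤ c * k ^ (1/2 : ℝ) := by
      rw [← Real.sqrt_eq_rpow]
      refine (sq_le_sq₀ (by norm_num) (by positivity)).1 ?_
      rw [mul_pow, Real.sq_sqrt hk.le]; simpa using h
    rw [e]
    nlinarith
  have h4 : Real.exp (-(1 + k ^ 2) * r) ≤ Real.exp (-a) := Real.exp_le_exp.2 (by
    rw [ha]; nlinarith)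
  rw [Real.rpow_neg hr.le]
  have hr34 : 0 < r ^ (3/4 : ℝ) := by positivity
  calc k * Real.exp (-(1 + k ^ 2) * r) ≤ k * Real.exp (-a) := by gcongr
    _ ≤ (c * k ^ (3/2 : ℝ)) * (k ^ (3/2 : ℝ) * r ^ (3/4 : ℝ))⁻¹ := by
        rw [Real.exp_neg, ← h2]
        gcongr
    _ = c * (r ^ (3/4 : ℝ))⁻¹ := by
        have : 0 < k ^ (3/2 : ℝ) := by positivity
        field_simp

theorem stmt_13 (S K : ℝ → H →L[ℝ] H)
    (hS : ∀ t : ℝ, 0 ≤ t → ∀ (x : H) (k : ℤ),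
      (S t x) k = Real.exp (-(1 + (k : ℝ) ^ 2) * t) * x k)
    (hK : ∀ t : ℝ, 0 < t → ∀ (x : H) (k : ℤ),
      (K t x) k = -(k : ℝ) * Real.exp (-(1 + (k : ℝ) ^ 2) * t) * x (-k))
    (F : H → H) (hF : ∃ L : NNReal, LipschitzWith L F)
    (ε T : ℝ) (hε : 0 < ε) (hT : 0 < T) (x z : H) :
    ∃ (u : ℝ → H) (y : ℝ → H),
      MeasureTheory.StronglyMeasurable u ∧
      IntervalIntegrable (fun t => ‖u t‖ ^ 2) MeasureTheory.volume 0 T ∧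
      ContinuousOn y (Set.Icc 0 T) ∧
      (∀ t ∈ Set.Icc (0 : ℝ) T,
        y t = S t x + (∫ s in (0 : ℝ)..t, K (t - s) (F (y s))) +
          ∫ s in (0 : ℝ)..t, S (t - s) (u s)) ∧
      ‖y T - z‖ ≤ ε := by
  obtain ⟨L, hL⟩ := hF
  -- strong continuity of S
  have hexp : ∀ (k : ℤ) (t : ℝ), 0 ≤ t → Real.exp (-(1 + (k : ℝ) ^ 2) * t) ≤ 1 := by
    intro k t ht
    rw [Real.exp_le_one_iff]
    nlinarith [sq_nonneg (k : ℝ)]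
  have hScont : ∀ w : H, Continuous fun t : ℝ => S (max t 0) w := by
    intro w
    refine H_cont _ w (fun k => ?_) (fun t k => ?_)
    · simp only [hS _ (le_max_right _ _)]
      fun_prop
    · rw [hS _ (le_max_right _ _), abs_mul, abs_of_pos (Real.exp_pos _)]
      exact mul_le_of_le_one_left (abs_nonneg _) (hexp _ _ (le_max_right _ _))
  -- the target
  obtain ⟨s₀, hs₀⟩ : ∃ s₀ : Finset ℤ, ‖(∑ k ∈ s₀, lp.single (E := fun _ : ℤ => ℝ) 2 k (z k)) - z‖
      ≤ ε / 2 := by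
    have h := lp.hasSum_single (p := 2) (by simp) z
    have h2 := (Metric.tendsto_nhds.1 h (ε / 2) (by positivity)).exists
    obtain ⟨s, hs⟩ := h2
    exact ⟨s, by rw [← dist_eq_norm]; exact hs.le⟩
  let p : H := ∑ k ∈ s₀, lp.single (E := fun _ : ℤ => ℝ) 2 k
    (Real.exp ((1 + (k : ℝ) ^ 2) * T) * z k)
  have hp : S T p = ∑ k ∈ s₀, lp.single (E := fun _ : ℤ => ℝ) 2 k (z k) := by
    apply lp.ext
    funext j
    rw [hS T hT.le, lp_sum_single_apply s₀ (fun k => Real.exp ((1 + (k : ℝ) ^ 2) * T) * z k),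
      lp_sum_single_apply]
    split_ifs
    · rw [← mul_assoc, ← Real.exp_add, neg_mul, neg_add_cancel, Real.exp_zero, one_mul]
    · simp
  let w : H := (1 / T) • (p - x)
  let g : ℝ → H := fun t => S (max t 0) x + t • S (max t 0) w
  have hgc : Continuous g := (hScont x).add (continuous_id.smul (hScont w))
  have hgT : g T = S T p := by
    simp only [g, w, max_eq_left hT.le, map_smul, smul_smul]
    rw [mul_one_div_cancel hT.ne', one_smul, map_sub]
    abel
  obtain ⟨M₀, hM₀⟩ : ∃ M₀, ∀ t ∈ Set.Icc (0:ℝ) T, ‖F (g t)‖ ≤ M₀ :=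
    isCompact_Icc.exists_bound_of_continuousOn (hL.continuous.comp hgc).continuousOn
  have hM₀0 : 0 ≤ M₀ := (norm_nonneg _).trans (hM₀ 0 ⟨le_rfl, hT.le⟩)
  -- parameters
  let κ₀ : ℝ → ℝ := fun r => |r ^ (-(3/4) : ℝ)|
  have hκ₀ : ∀ a b : ℝ, IntervalIntegrable κ₀ volume a b := fun a b =>
    (intervalIntegral.intervalIntegrable_rpow' (by norm_num)).abs
  set I₀ := ∫ r in (0:ℝ)..T, κ₀ r with hI₀
  have hI₀0 : 0 ≤ I₀ := intervalIntegral.integral_nonneg hT.le fun r _ => abs_nonneg _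
  let A : ℝ := 2 * I₀ * L + 4 * I₀ * M₀ / ε + 1
  have hA : 0 < A := by positivity
  let c : ℝ := 1 / A
  have hc : 0 < c := by positivity
  have hcL : c * I₀ * L ≤ 1 / 2 := by
    have : 2 * I₀ * L ≤ A := by
      have : 0 ≤ 4 * I₀ * M₀ / ε := by positivity
      simp only [A]; linarith
    simp only [c]
    rw [div_mul_eq_mul_div, div_mul_eq_mul_div, div_le_iff₀ hA]
    linarith
  have hcM : 2 * (c * I₀ * M₀) ≤ ε / 2 := by
    have : 4 * I₀ * M₀ / ε ≤ A := by
      have : 0 ≤ 2 * I₀ * L := by positivity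
      simp only [A]; linarith
    rw [div_le_iff₀ hε] at this
    simp only [c]
    rw [div_mul_eq_mul_div, div_mul_eq_mul_div, mul_div_assoc', div_le_iff₀ hA]
    linarith
  obtain ⟨n, hn⟩ := exists_nat_ge (1 / c ^ 2)
  let s : Finset ℤ := Finset.Icc (-(n:ℤ)) n
  have hsneg : ∀ k : ℤ, -k ∈ s ↔ k ∈ s := by
    intro k; simp only [s, Finset.mem_Icc]; omega
  have hks : ∀ k : ℤ, k ∉ s → 0 < |(k:ℝ)| ∧ 1 ≤ c ^ 2 * |(k:ℝ)| := by
    intro k hk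
    have h1 : (n:ℤ) + 1 ≤ |k| := by
      simp only [s, Finset.mem_Icc] at hk
      by_contra! h
      apply hk
      have := abs_le.1 (show |k| ≤ n by omega)
      exact this
    have h2 : (n:ℝ) + 1 ≤ |(k:ℝ)| := by exact_mod_cast h1
    have hn0 : (0:ℝ) ≤ n := Nat.cast_nonneg n
    refine ⟨by linarith, ?_⟩
    rw [div_le_iff₀ (by positivity)] at hn
    nlinarith [sq_nonneg c]
  let P : H →L[ℝ] H := coordSum s (fun _ => 1) id
  let D : H →L[ℝ] H := coordSum s (fun k => -(k:ℝ)) (fun k => -k)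
  have hKP : ∀ r : ℝ, 0 < r → ∀ v, K r (P v) = S r (D v) := by
    intro r hr v
    apply lp.ext
    funext k
    rw [hK r hr, hS r hr.le, coordSum_apply, coordSum_apply]
    simp only [hsneg, id]
    split_ifs <;> ring
  let E : ℝ → H →L[ℝ] H := fun r => if 0 < r then (K r).comp (ContinuousLinearMap.id ℝ H - P) else 0
  have hEpos : ∀ r, 0 < r → ∀ v, E r v = K r v - S r (D v) := by
    intro r hr v
    simp only [E, if_pos hr]
    simp [hKP r hr]
  have hEcoord : ∀ r v k, (E r v) k = if 0 < r then
      (if k ∈ s then 0 else -(k : ℝ) * Real.exp (-(1 + (k : ℝ) ^ 2) * r) * v (-k)) else 0 := by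
    intro r v k
    by_cases hr : 0 < r
    · rw [hEpos r hr, lp.coeFn_sub, Pi.sub_apply, hK r hr, hS r hr.le, coordSum_apply, if_pos hr]
      split_ifs <;> ring
    · simp [E, hr]
  have hcoordc : ∀ k : ℤ, Continuous fun v : H => v k := fun k =>
    (lp.evalCLM ℝ (fun _ : ℤ => ℝ) 2 k).continuous
  have hEmeas : ∀ φ : ℝ → H, Continuous φ →
      AEStronglyMeasurable (fun r => E r (φ r)) volume := by
    intro φ hφ
    refine (H_meas _ fun k => ?_).aestronglyMeasurable
    simp only [hEcoord]
    refine Measurable.ite measurableSet_Ioi ?_ measurable_const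
    split_ifs
    · exact measurable_const
    · have := (hcoordc (-k)).comp hφ
      have h2 : Continuous fun r => φ r (-k) := this
      exact Continuous.measurable (by fun_prop)
  let κ : ℝ → ℝ := fun r => c * κ₀ r
  have hκ0 : ∀ r, 0 ≤ κ r := fun r => mul_nonneg hc.le (abs_nonneg _)
  have hEbound : ∀ r v, ‖E r v‖ ≤ κ r * ‖v‖ := by
    intro r v
    refine H_norm_le v _ _ (hκ0 r) (fun k => -k) neg_injective fun k => ?_
    rw [hEcoord]
    have h0 : 0 ≤ κ r * |v (-k)| := mul_nonneg (hκ0 r) (abs_nonneg _)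
    split_ifs with hr hk
    · simpa using h0
    · rw [abs_mul]
      refine mul_le_mul_of_nonneg_right ?_ (abs_nonneg _)
      rw [abs_mul, abs_neg, abs_of_pos (Real.exp_pos _), ← sq_abs]
      refine (scalar_bound c _ r hc (hks k hk).1 (hks k hk).2 hr).trans ?_
      exact mul_le_mul_of_nonneg_left (le_abs_self _) hc.le
    · simpa using h0
  have hIκ : ∫ r in (0:ℝ)..T, κ r = c * I₀ := intervalIntegral.integral_const_mul _ _
  obtain ⟨y, hyc, ⟨M, hM⟩, hy, hyT⟩ := fixpt E κ (fun a b => (hκ₀ a b).const_mul c) hEbound hκ0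
    hEmeas F L hL T hT g hgc.continuousOn M₀ hM₀ (by rw [hIκ]; exact hcL)
  rw [hIκ] at hyT
  -- integrability of the S-convolution
  have hDFc : Continuous fun s => D (F (y s)) := D.continuous.comp (hL.continuous.comp hyc)
  let E' : ℝ → H →L[ℝ] H := fun r => if 0 < r then S r else 0
  have hE'coord : ∀ r v k, (E' r v) k = if 0 < r then
      Real.exp (-(1 + (k : ℝ) ^ 2) * r) * v k else 0 := by
    intro r v k
    by_cases hr : 0 < r
    · simp only [E', if_pos hr]; exact hS r hr.le v k
    · simp [E', hr]
  have hint : ∀ t : ℝ, IntervalIntegrable (fun s => E' (t - s) (D (F (y s)))) volume 0 t := by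
    intro t
    have h := conv_intervalIntegrable E' (fun _ => 1) (fun a b => by simp)
      (fun r v => by
        refine H_norm_le v _ _ zero_le_one id Function.injective_id fun k => ?_
        rw [hE'coord]
        split_ifs with hr
        · rw [abs_mul, abs_of_pos (Real.exp_pos _)]
          exact mul_le_mul_of_nonneg_right (hexp _ _ hr.le) (abs_nonneg _)
        · simp)
      (fun _ => zero_le_one)
      (fun φ hφ => by
        refine (H_meas _ fun k => ?_).aestronglyMeasurable
        simp only [hE'coord]
        refine Measurable.ite measurableSet_Ioi ?_ measurable_const
        have h2 : Continuous fun r => φ r k := (hcoordc k).comp hφ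
        exact Continuous.measurable (by fun_prop))
      (fun s => D (F (y s))) hDFc (‖D‖ * M)
      (fun s => (D.le_opNorm _).trans (mul_le_mul_of_nonneg_left (hM s) (norm_nonneg _))) t t 0
    have := h.comp_sub_left t
    simpa using this
  have hSS : ∀ t s : ℝ, 0 ≤ s → s ≤ t → S (t - s) (S s w) = S t w := by
    intro t s hs hst
    apply lp.ext
    funext k
    rw [hS _ (sub_nonneg.2 hst), hS _ hs, hS _ (hs.trans hst), ← mul_assoc, ← Real.exp_add]
    congr 2
    ring
  let u : ℝ → H := fun s => S (max s 0) w - D (F (y s))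
  have huc : Continuous u := (hScont w).sub hDFc
  refine ⟨u, y, huc.stronglyMeasurable, (huc.norm.pow 2).intervalIntegrable _ _,
    hyc.continuousOn, ?_, ?_⟩
  · intro t ht
    obtain ⟨hEi, hyt⟩ := hy t ht
    have hae : ∀ᵐ s : ℝ ∂volume, s ≠ t := by
      simp [ae_iff]
    have e1 : ∫ s in (0 : ℝ)..t, K (t - s) (F (y s)) =
        ∫ s in (0 : ℝ)..t, (E (t - s) (F (y s)) + E' (t - s) (D (F (y s)))) := by
      refine intervalIntegral.integral_congr_ae ?_
      filter_upwards [hae] with s hst hs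
      rw [Set.uIoc_of_le ht.1] at hs
      have hpos : 0 < t - s := sub_pos.2 (lt_of_le_of_ne hs.2 hst)
      rw [hEpos _ hpos]
      simp only [E', if_pos hpos]
      abel
    have e2 : ∫ s in (0 : ℝ)..t, S (t - s) (u s) =
        ∫ s in (0 : ℝ)..t, (S t w - E' (t - s) (D (F (y s)))) := by
      refine intervalIntegral.integral_congr_ae ?_
      filter_upwards [hae] with s hst hs
      rw [Set.uIoc_of_le ht.1] at hs
      have hpos : 0 < t - s := sub_pos.2 (lt_of_le_of_ne hs.2 hst)
      simp only [E', if_pos hpos, u]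
      rw [map_sub, max_eq_left hs.1.le, hSS t s hs.1.le hs.2]
    rw [e1, e2, intervalIntegral.integral_add hEi (hint t),
      intervalIntegral.integral_sub (by simp) (hint t), hyt]
    simp only [g, max_eq_left ht.1, intervalIntegral.integral_const, sub_zero]
    abel
  · have h1 : y T - z = (y T - g T) + (g T - z) := by abel
    rw [h1]
    refine (norm_add_le _ _).trans ?_
    rw [← hp, ← hgT] at hs₀
    linarith
end
end

section
/- Let F : ℝ → ℝ be continuously differentiable with M = sup_{r∈ℝ} |F'(r)| < ∞, let x : ℝ → ℝ be continuously differentiable with x(0) = x(2π), and let y : [0,2π] → ℝ be measurable with ∫₀^{2π} y(ξ)² dξ < ∞. Then | ∫₀^{2π} F(x(ξ) + y(ξ)) x'(ξ) dξ | ≤ M (∫₀^{2π} y(ξ)² dξ)^{1/2} (∫₀^{2π} x'(ξ)² dξ)^{1/2}. -/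
open Real MeasureTheory

/-- The estimate `|⟨D_ξ F(x+y), x⟩| ≤ ‖DF‖₀ |y|₂ |D_ξ x|₂` for the Nemytskii operator of a
scalar `C¹` function `F` with derivative bounded by `M`: for `x` of class `C¹` with
`x(0) = x(2π)` and `y` measurable and square-integrable on `[0,2π]`,
`|∫₀^{2π} F(x(ξ)+y(ξ)) x'(ξ) dξ| ≤ M (∫₀^{2π} y²)^{1/2} (∫₀^{2π} x'²)^{1/2}`. -/
theorem stmt_16 (F : ℝ → ℝ) (hF : ContDiff ℝ 1 F) (M : ℝ)
    (hM : ∀ r : ℝ, |deriv F r| ≤ M)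
    (x : ℝ → ℝ) (hx : ContDiff ℝ 1 x) (hper : x 0 = x (2 * Real.pi))
    (y : ℝ → ℝ) (hy_meas : Measurable y)
    (hy_int : IntervalIntegrable (fun ξ => (y ξ) ^ 2) MeasureTheory.volume 0 (2 * Real.pi)) :
    |∫ ξ in (0 : ℝ)..(2 * Real.pi), F (x ξ + y ξ) * deriv x ξ| ≤
      M * Real.sqrt (∫ ξ in (0 : ℝ)..(2 * Real.pi), (y ξ) ^ 2) *
        Real.sqrt (∫ ξ in (0 : ℝ)..(2 * Real.pi), (deriv x ξ) ^ 2) := by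
  have hpi : (0 : ℝ) ≤ 2 * Real.pi := by positivity
  have hdx : Continuous (deriv x) := hx.continuous_deriv le_rfl
  have hFc : Continuous F := hF.continuous
  have hxc : Continuous x := hx.continuous
  have hzero : ∫ ξ in (0 : ℝ)..(2 * Real.pi), F (x ξ) * deriv x ξ = 0 := by
    have h := intervalIntegral.integral_comp_mul_deriv (a := 0) (b := 2 * Real.pi)
      (f := x) (f' := deriv x) (g := F)
      (fun t _ => (hx.differentiable one_ne_zero t).hasDerivAt) hdx.continuousOn hFc
    rw [hper, intervalIntegral.integral_same] at h
    simpa using h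
  have hLip : ∀ a b : ℝ, |F (a + b) - F a| ≤ M * |b| := by
    intro a b
    have h := Convex.norm_image_sub_le_of_norm_deriv_le (f := F) (s := Set.univ) (C := M)
      (x := a) (y := a + b) (fun t _ => hF.differentiable one_ne_zero t)
      (fun t _ => hM t) convex_univ (Set.mem_univ _) (Set.mem_univ _)
    simpa using h
  have hM0 : 0 ≤ M := (abs_nonneg _).trans (hM 0)
  have hI1 : IntervalIntegrable (fun ξ => F (x ξ) * deriv x ξ) volume 0 (2 * Real.pi) :=
    ((hFc.comp hxc).mul hdx).intervalIntegrable _ _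
  have hdI : IntervalIntegrable (fun ξ => (deriv x ξ) ^ 2) volume 0 (2 * Real.pi) :=
    (hdx.pow 2).intervalIntegrable _ _
  rw [intervalIntegrable_iff_integrableOn_Ioc_of_le hpi] at hI1 hdI hy_int
  rw [intervalIntegral.integral_of_le hpi] at hzero
  simp only [intervalIntegral.integral_of_le hpi]
  unfold IntegrableOn at hI1 hdI hy_int
  generalize volume.restrict (Set.Ioc 0 (2 * Real.pi)) = μ at *
  have hyL : MemLp y 2 μ := (memLp_two_iff_integrable_sq hy_meas.aestronglyMeasurable).2 hy_int
  have hdL : MemLp (deriv x) 2 μ :=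
    (memLp_two_iff_integrable_sq hdx.measurable.aestronglyMeasurable).2 hdI
  have hprod : Integrable (fun ξ => ‖y ξ‖ * ‖deriv x ξ‖) μ := by
    have h := (hyL.integrable_mul hdL).norm
    simpa [norm_mul] using h
  have hbound : ∀ ξ, ‖(F (x ξ + y ξ) - F (x ξ)) * deriv x ξ‖ ≤ M * (‖y ξ‖ * ‖deriv x ξ‖) := by
    intro ξ
    rw [norm_mul, ← mul_assoc]
    exact mul_le_mul_of_nonneg_right (hLip _ _) (norm_nonneg _)
  have hI2 : Integrable (fun ξ => (F (x ξ + y ξ) - F (x ξ)) * deriv x ξ) μ := by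
    refine (hprod.const_mul M).mono' ?_ (Filter.Eventually.of_forall hbound)
    exact (((hFc.measurable.comp (hxc.measurable.add hy_meas)).sub
      (hFc.measurable.comp hxc.measurable)).mul hdx.measurable).aestronglyMeasurable
  have heq : ∫ ξ, F (x ξ + y ξ) * deriv x ξ ∂μ
      = ∫ ξ, (F (x ξ + y ξ) - F (x ξ)) * deriv x ξ ∂μ := by
    have h := integral_add hI2 hI1
    rw [hzero, add_zero] at h
    rw [← h]
    congr 1
    ext ξ
    ring
  have hCS := integral_mul_norm_le_Lp_mul_Lq (μ := μ) (f := y) (g := deriv x)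
    Real.HolderConjugate.two_two (by simpa using hyL) (by simpa using hdL)
  simp only [Real.rpow_two, ← Real.sqrt_eq_rpow, Real.norm_eq_abs, sq_abs] at hCS
  rw [heq, mul_assoc]
  calc |∫ ξ, (F (x ξ + y ξ) - F (x ξ)) * deriv x ξ ∂μ|
      ≤ ∫ ξ, M * (‖y ξ‖ * ‖deriv x ξ‖) ∂μ :=
        norm_integral_le_of_norm_le (hprod.const_mul M) (Filter.Eventually.of_forall hbound)
    _ = M * ∫ ξ, ‖y ξ‖ * ‖deriv x ξ‖ ∂μ := integral_const_mul _ _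
    _ ≤ _ := mul_le_mul_of_nonneg_left hCS hM0
end
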